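/- Let M be a countable transitive model of ZF⁻ in which every set is countable (so that 𝒫(ω)^M is a proper class of M), let ℙ be the forcing whose conditions are partial functions from ω to 2 in M ordered by reverse inclusion, and let ℚ be the finite support product of ω-many copies of ℙ. Then there is a ℚ-name τ ∈ M such that for every ℚ-generic filter G over M, τ^G = 𝒫(ω)^M; in particular, forcing with ℚ turns the proper class 𝒫(ω)^M into a set in every ℚ-generic extension. -/

import Mathlib

noncomputable section

namespace CF

open scoped ZFSet

attribute [local instance] Classical.propDecidable

/-! ### First-order formulas of the language of set theory -/

/-- First-order `∈`-formulas with variables indexed by `ℕ`. -/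
inductive EFormula : Type
  | mem : ℕ → ℕ → EFormula
  | eq : ℕ → ℕ → EFormula
  | not : EFormula → EFormula
  | or : EFormula → EFormula → EFormula
  | ex : ℕ → EFormula → EFormula

/-- Satisfaction of an `∈`-formula in the structure `⟨D, ∈⟩` under assignment `v`. -/
def EFormula.Sat (D : Set ZFSet) (v : ℕ → ZFSet) : EFormula → Prop
  | .mem i j => v i ∈ v j
  | .eq i j => v i = v j
  | .not φ => ¬ EFormula.Sat D v φ
  | .or φ ψ => EFormula.Sat D v φ ∨ EFormula.Sat D v ψ
  | .ex i φ => ∃ x ∈ D, EFormula.Sat D (Function.update v i x) φ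

/-- All variables occurring in the formula are `< m`. -/
def EFormula.VarsLt (m : ℕ) : EFormula → Prop
  | .mem i j => i < m ∧ j < m
  | .eq i j => i < m ∧ j < m
  | .not φ => EFormula.VarsLt m φ
  | .or φ ψ => EFormula.VarsLt m φ ∧ EFormula.VarsLt m ψ
  | .ex i φ => i < m ∧ EFormula.VarsLt m φ

/-- First-order formulas of the two-sorted language of `GB⁻`: set variables indexed by `ℕ`,
class parameters indexed by `ℕ`, and only set quantifiers. -/
inductive GBFormula : Type
  | mem : ℕ → ℕ → GBFormula
  | eq : ℕ → ℕ → GBFormula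
  | cls : ℕ → ℕ → GBFormula    -- `vᵢ ∈ C_j`
  | not : GBFormula → GBFormula
  | or : GBFormula → GBFormula → GBFormula
  | ex : ℕ → GBFormula → GBFormula

/-- Satisfaction of a `GBFormula` with set quantifiers ranging over `Mset`,
class parameters `Cs` and set assignment `v`. -/
def GBFormula.Sat (Mset : Set ZFSet) (Cs : ℕ → Set ZFSet) (v : ℕ → ZFSet) : GBFormula → Prop
  | .mem i j => v i ∈ v j
  | .eq i j => v i = v j
  | .cls i j => v i ∈ Cs j
  | .not φ => ¬ GBFormula.Sat Mset Cs v φ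
  | .or φ ψ => GBFormula.Sat Mset Cs v φ ∨ GBFormula.Sat Mset Cs v ψ
  | .ex i φ => ∃ x ∈ Mset, GBFormula.Sat Mset Cs (Function.update v i x) φ

/-! ### Countable transitive models of GB⁻ -/

/-- A countable transitive second-order model `𝕄 = ⟨M, 𝒞⟩` of `GB⁻`:
`M` is transitive and countable, classes are subsets of `M`, sets are classes, and the axioms
of `GB⁻` hold (extensionality and foundation are automatic for `ZFSet`; the set axioms of `ZF⁻`
with separation and collection allowing class parameters, together with first-order class
comprehension, are listed). -/
structure GBModel.{u} where
  M : Set ZFSet.{u}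
  Cls : Set (Set ZFSet)
  countable_M : M.Countable
  countable_Cls : Cls.Countable
  transitive : ∀ x ∈ M, ∀ y : ZFSet, y ∈ x → y ∈ M
  sets_are_classes : ∀ x ∈ M, x.toSet ∈ Cls
  classes_sub : ∀ C ∈ Cls, C ⊆ M
  empty_mem : (∅ : ZFSet) ∈ M
  pair_mem : ∀ x ∈ M, ∀ y ∈ M, ({x, y} : ZFSet) ∈ M
  sUnion_mem : ∀ x ∈ M, (⋃₀ x : ZFSet) ∈ M
  omega_mem : ZFSet.omega ∈ M
  comprehension : ∀ (φ : GBFormula) (v : ℕ → ZFSet) (Cs : ℕ → Set ZFSet),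
    (∀ n, v n ∈ M) → (∀ n, Cs n ∈ Cls) →
    {x : ZFSet | x ∈ M ∧ GBFormula.Sat M Cs (Function.update v 0 x) φ} ∈ Cls
  separation : ∀ C ∈ Cls, ∀ a ∈ M, ∃ b ∈ M, ∀ x : ZFSet, x ∈ b ↔ x ∈ a ∧ x ∈ C
  collection : ∀ C ∈ Cls, ∀ a ∈ M,
    (∀ x : ZFSet, x ∈ a → ∃ y ∈ M, x.pair y ∈ C) →
    ∃ b ∈ M, ∀ x : ZFSet, x ∈ a → ∃ y : ZFSet, y ∈ b ∧ x.pair y ∈ C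

/-- A notion of class forcing `ℙ = ⟨P, ≤_ℙ⟩` for `𝕄`: a partial order (with maximal element
`𝟙_ℙ`) whose domain and order relation are classes of `𝕄`. -/
structure ClassForcing (𝕄 : GBModel) where
  P : Set ZFSet
  le : ZFSet → ZFSet → Prop
  one : ZFSet
  one_mem : one ∈ P
  le_one : ∀ p ∈ P, le p one
  le_refl : ∀ p ∈ P, le p p
  le_trans : ∀ p q r : ZFSet, le p q → le q r → le p r
  P_cls : P ∈ 𝕄.Cls
  le_cls : {x : ZFSet | ∃ p ∈ P, ∃ q ∈ P, le p q ∧ x = p.pair q} ∈ 𝕄.Cls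

/-! ### Names and their evaluation -/

/-- Auxiliary rank-bounded version of `IsName`. -/
def IsNameAux (S : Set ZFSet) (o : Ordinal) (σ : ZFSet) : Prop :=
  ∀ x ∈ σ.toSet, ∃ τ p : ZFSet, x = τ.pair p ∧ p ∈ S ∧
    ∃ _h : τ.rank < o, IsNameAux S τ.rank τ
termination_by o

/-- `σ` is a `ℙ`-name (for the forcing with conditions `S`): every element of `σ` is a pair
`⟨τ, p⟩` with `τ` a `ℙ`-name and `p ∈ S`. -/
def IsName (S : Set ZFSet) (σ : ZFSet) : Prop := IsNameAux S σ.rank σ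

/-- Image of a ZFSet under an arbitrary function (using choice for definability). -/
def zimage (f : ZFSet → ZFSet) (x : ZFSet) : ZFSet :=
  @ZFSet.image f (Classical.allZFSetDefinable _) x

/-- Auxiliary rank-bounded version of the evaluation `σ^G` of a name by a filter. -/
def nameEvalAux (G : Set ZFSet) (o : Ordinal) (σ : ZFSet) : ZFSet :=
  zimage (fun τ => if h : τ.rank < o then nameEvalAux G τ.rank τ else ∅)
    (ZFSet.sep (fun τ => ∃ p, p ∈ G ∧ τ.pair p ∈ σ) (⋃₀ ⋃₀ σ))
termination_by o
decreasing_by exact h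

/-- The evaluation `σ^G = {τ^G | ∃ p ∈ G, ⟨τ, p⟩ ∈ σ}` of a name `σ` by a filter `G`. -/
def nameEval (G : Set ZFSet) (σ : ZFSet) : ZFSet := nameEvalAux G σ.rank σ

/-- Auxiliary rank-bounded version of `nameTC`. -/
def nameTCAux (o : Ordinal) (σ : ZFSet) : Set ZFSet :=
  {x | ∃ τ p : ZFSet, τ.pair p ∈ σ ∧ (x = p ∨ ∃ _h : τ.rank < o, x ∈ nameTCAux τ.rank τ)}
termination_by o

/-- The set `tc(σ) = ⋃ {{p} ∪ tc(τ) | ⟨τ,p⟩ ∈ σ}` of conditions appearing in the transitive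
closure of the name `σ`. -/
def nameTC (σ : ZFSet) : Set ZFSet := nameTCAux σ.rank σ

/-! ### Filters, genericity, generic extensions -/

/-- `G` is a filter on the partial order with domain `S` and ordering `le`. -/
def IsFilterOn (S : Set ZFSet) (le : ZFSet → ZFSet → Prop) (G : Set ZFSet) : Prop :=
  G ⊆ S ∧ G.Nonempty ∧ (∀ p ∈ G, ∀ q ∈ S, le p q → q ∈ G) ∧
    ∀ p ∈ G, ∀ q ∈ G, ∃ r ∈ G, le r p ∧ le r q

/-- `D` is a dense subclass of the partial order `⟨S, le⟩`. -/
def DenseIn (S : Set ZFSet) (le : ZFSet → ZFSet → Prop) (D : Set ZFSet) : Prop :=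
  D ⊆ S ∧ ∀ p ∈ S, ∃ q ∈ D, le q p

/-- `G` is a generic filter on `⟨S, le⟩` over `𝕄`: a filter meeting every dense subclass
of `⟨S, le⟩` lying in `𝒞`. -/
def IsGeneric (𝕄 : GBModel) (S : Set ZFSet) (le : ZFSet → ZFSet → Prop) (G : Set ZFSet) : Prop :=
  IsFilterOn S le G ∧ ∀ D ∈ 𝕄.Cls, DenseIn S le D → (G ∩ D).Nonempty

/-- The generic extension `M[G] = {σ^G | σ ∈ M a name for the forcing with domain S}`. -/
def MGen (𝕄 : GBModel) (S : Set ZFSet) (G : Set ZFSet) : Set ZFSet :=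
  {x | ∃ σ : ZFSet, σ ∈ 𝕄.M ∧ IsName S σ ∧ nameEval G σ = x}

/-! ### Compatibility, the set decision property -/

/-- `p` and `q` are compatible in `⟨S, le⟩`. -/
def Compat (S : Set ZFSet) (le : ZFSet → ZFSet → Prop) (p q : ZFSet) : Prop :=
  ∃ r ∈ S, le r p ∧ le r q

/-- `p ≤* q` : every extension of `p` is compatible with `q`. -/
def leStar (S : Set ZFSet) (le : ZFSet → ZFSet → Prop) (p q : ZFSet) : Prop :=
  ∀ r ∈ S, le r p → Compat S le r q

/-- `p` decides the set of conditions `A`: for every `a ∈ A`, either `p ≤* a` or `p ⊥ a`. -/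
def Decides (S : Set ZFSet) (le : ZFSet → ZFSet → Prop) (p A : ZFSet) : Prop :=
  ∀ a : ZFSet, a ∈ A → leStar S le p a ∨ ¬ Compat S le p a

/-- The set decision property: every set of conditions in `M` is decided densely. -/
def SetDecisionProperty (𝕄 : GBModel) (F : ClassForcing 𝕄) : Prop :=
  ∀ p ∈ F.P, ∀ A : ZFSet, A ∈ 𝕄.M → (∀ a : ZFSet, a ∈ A → a ∈ F.P) →
    ∃ q ∈ F.P, F.le q p ∧ Decides F.P F.le q A

/-! ### The forcing theorem -/

/-- Encode a finite list of sets as a single set by iterated Kuratowski pairing. -/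
def listEncode : List ZFSet → ZFSet
  | [] => ∅
  | a :: l => a.pair (listEncode l)

/-- The assignment sending variable `n < m` to `σₙ^G` (and `∅` beyond `m`). -/
def namesAssign (G : Set ZFSet) (m : ℕ) (σs : Fin m → ZFSet) : ℕ → ZFSet :=
  fun n => if h : n < m then nameEval G (σs ⟨n, h⟩) else ∅

/-- `p ⊩_ℙ φ(σ₀, …, σ_{m-1})` : for every generic `G ∋ p`, `M[G] ⊨ φ(σ₀^G, …, σ_{m-1}^G)`. -/
def Forces (𝕄 : GBModel) (F : ClassForcing 𝕄) (φ : EFormula) (m : ℕ) (p : ZFSet)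
    (σs : Fin m → ZFSet) : Prop :=
  ∀ G : Set ZFSet, IsGeneric 𝕄 F.P F.le G → p ∈ G →
    EFormula.Sat (MGen 𝕄 F.P G) (namesAssign G m σs) φ

/-- `ℙ` satisfies the forcing theorem over `𝕄`: for every `∈`-formula `φ(v₀,…,v_{m-1})`,
the forcing relation is a class of `𝕄` (definability lemma) and everything true in a generic
extension is forced by a condition in the generic filter (truth lemma). -/
def SatisfiesForcingTheorem (𝕄 : GBModel) (F : ClassForcing 𝕄) : Prop :=
  ∀ (φ : EFormula) (m : ℕ), EFormula.VarsLt m φ →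
    ({x : ZFSet | ∃ p ∈ F.P, ∃ σs : Fin m → ZFSet,
        (∀ i, σs i ∈ 𝕄.M ∧ IsName F.P (σs i)) ∧
        Forces 𝕄 F φ m p σs ∧
        x = p.pair (listEncode (List.ofFn σs))} ∈ 𝕄.Cls) ∧
    ∀ σs : Fin m → ZFSet, (∀ i, σs i ∈ 𝕄.M ∧ IsName F.P (σs i)) →
      ∀ G : Set ZFSet, IsGeneric 𝕄 F.P F.le G →
        EFormula.Sat (MGen 𝕄 F.P G) (namesAssign G m σs) φ →
        ∃ p ∈ G, Forces 𝕄 F φ m p σs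

/-! ### Complete subforcings, the set reduction property -/

/-- `A` is an antichain of the partial order `⟨S, le⟩`. -/
def IsAntichainIn (S : Set ZFSet) (le : ZFSet → ZFSet → Prop) (A : Set ZFSet) : Prop :=
  A ⊆ S ∧ ∀ p ∈ A, ∀ q ∈ A, p ≠ q → ¬ Compat S le p q

/-- `A` is a maximal antichain of the partial order `⟨S, le⟩`. -/
def IsMaxAntichainIn (S : Set ZFSet) (le : ZFSet → ZFSet → Prop) (A : Set ZFSet) : Prop :=
  IsAntichainIn S le A ∧ ∀ p ∈ S, ∃ a ∈ A, Compat S le p a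

/-- `ℚ ⊲∘ ℙ` : `Q` is a set-sized complete subforcing of `ℙ` (with the induced ordering):
`Q ∈ M`, `Q ⊆ P`, `𝟙 ∈ Q`, and every maximal antichain of `ℚ` in `M` is predense in `ℙ`. -/
def IsCompleteSub (𝕄 : GBModel) (F : ClassForcing 𝕄) (Q : ZFSet) : Prop :=
  Q ∈ 𝕄.M ∧ Q.toSet ⊆ F.P ∧ F.one ∈ Q ∧
    ∀ A : ZFSet, A ∈ 𝕄.M → A.toSet ⊆ Q.toSet → IsMaxAntichainIn Q.toSet F.le A.toSet →
      ∀ p ∈ F.P, ∃ a : ZFSet, a ∈ A ∧ Compat F.P F.le p a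

/-- `ℚ^{∥q}` : the conditions of `Q` compatible with `q` in `ℙ`. -/
def QPar (𝕄 : GBModel) (F : ClassForcing 𝕄) (Q : ZFSet) (q : ZFSet) : Set ZFSet :=
  {r | r ∈ Q ∧ Compat F.P F.le r q}

/-- The property `(*)(A, q, ℚ)`: for every `a ∈ A`, the set of `r ∈ ℚ^{∥q}` such that either
all `s ≤ q, r` satisfy `s ≤* a`, or all `s ≤ q, r` satisfy `s ⊥ a`, is dense in `ℚ^{∥q}`. -/
def StarProp (𝕄 : GBModel) (F : ClassForcing 𝕄) (A q Q : ZFSet) : Prop :=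
  ∀ a : ZFSet, a ∈ A → ∀ r₀ ∈ QPar 𝕄 F Q q, ∃ r₁ ∈ QPar 𝕄 F Q q, F.le r₁ r₀ ∧
    ((∀ s ∈ F.P, F.le s q → F.le s r₁ → leStar F.P F.le s a) ∨
      (∀ s ∈ F.P, F.le s q → F.le s r₁ → ¬ Compat F.P F.le s a))

/-- The set reduction property. -/
def SetReductionProperty (𝕄 : GBModel) (F : ClassForcing 𝕄) : Prop :=
  ∀ A : ZFSet, A ∈ 𝕄.M → (∀ a : ZFSet, a ∈ A → a ∈ F.P) →
    ∀ p ∈ F.P, ∃ q ∈ F.P, F.le q p ∧ ∃ Q : ZFSet, IsCompleteSub 𝕄 F Q ∧ StarProp 𝕄 F A q Q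

/-- Every new set added by `ℙ` is added by a set-sized complete subforcing of `ℙ`. -/
def EveryNewSetBySub (𝕄 : GBModel) (F : ClassForcing 𝕄) : Prop :=
  ∀ G : Set ZFSet, IsGeneric 𝕄 F.P F.le G →
    ∀ x : ZFSet, x ∈ MGen 𝕄 F.P G → x ∉ 𝕄.M →
      ∃ Q : ZFSet, IsCompleteSub 𝕄 F Q ∧ x ∈ MGen 𝕄 Q.toSet (G ∩ Q.toSet)

/-! ### The q-reduction of a name -/

/-- First component of a Kuratowski pair (junk value `∅` otherwise). -/
def fstZ (x : ZFSet) : ZFSet :=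
  if h : ∃ a b : ZFSet, x = a.pair b then h.choose else ∅

/-- Second component of a Kuratowski pair (junk value `∅` otherwise). -/
def sndZ (x : ZFSet) : ZFSet :=
  if h : ∃ a b : ZFSet, x = a.pair b then h.choose_spec.choose else ∅

/-- Cartesian product of two `ZFSet`s. -/
def zprod (a b : ZFSet) : ZFSet :=
  ZFSet.sep (fun x => ∃ u v : ZFSet, u ∈ a ∧ v ∈ b ∧ x = u.pair v)
    (ZFSet.powerset (ZFSet.powerset (a ∪ b)))

/-- Auxiliary rank-bounded version of the `q`-reduction of a name to `Q`. -/
def reduceAux (S : Set ZFSet) (le : ZFSet → ZFSet → Prop) (Q q : ZFSet) (o : Ordinal)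
    (σ : ZFSet) : ZFSet :=
  zimage
    (fun x =>
      (if h : (fstZ x).rank < o then reduceAux S le Q q (fstZ x).rank (fstZ x) else ∅).pair
        (sndZ x))
    (ZFSet.sep
      (fun x => ∃ τ r : ZFSet, x = τ.pair r ∧ r ∈ Q ∧
        ∃ a : ZFSet, τ.pair a ∈ σ ∧ ∀ s ∈ S, le s q → le s r → leStar S le s a)
      (zprod (⋃₀ ⋃₀ σ) Q))
termination_by o
decreasing_by exact h

/-- The `q`-reduction `σ_q^ℚ = {⟨τ_q^ℚ, r⟩ | r ∈ ℚ ∧ ∃a (⟨τ,a⟩ ∈ σ ∧ ∀ s ≤ q,r (s ≤* a))}`. -/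
def reduceName (S : Set ZFSet) (le : ZFSet → ZFSet → Prop) (Q q σ : ZFSet) : ZFSet :=
  reduceAux S le Q q σ.rank σ

/-! ### Projections -/

/-- `f` is a projection from `⟨S, le⟩` (with maximum `one`) onto the subforcing with domain
`Qs`, respecting `X`. -/
def IsProjectionResp (S : Set ZFSet) (le : ZFSet → ZFSet → Prop) (one : ZFSet)
    (Qs X : Set ZFSet) (f : ZFSet → ZFSet) : Prop :=
  (∀ p ∈ S, f p ∈ Qs) ∧
  f one = one ∧
  (∀ p ∈ S, ∀ q ∈ S, le p q → le (f p) (f q)) ∧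
  (∀ p ∈ S, ∀ q ∈ Qs, le q (f p) → ∃ r ∈ S, le r p ∧ le (f r) q) ∧
  (∀ p ∈ X, ∀ q ∈ S, le (f q) p → le q p) ∧
  (∀ p ∈ X, f p = p)

/-- `ℙ` is approachable by projections: there is a class `Π ∈ 𝒞` whose sections `π_{X,y}`
are such that for every set `X ⊆ ℙ` there are a set `y` and a set-sized subforcing `ℚ ⊇ X ∪ {𝟙}`
of `ℙ` with `π_{X,y} : ℙ → ℚ` a projection respecting `X`. -/
def ApproachableByProjections (𝕄 : GBModel) (F : ClassForcing 𝕄) : Prop :=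
  ∃ Pi ∈ 𝕄.Cls, ∀ X : ZFSet, X ∈ 𝕄.M → (∀ x : ZFSet, x ∈ X → x ∈ F.P) →
    ∃ y ∈ 𝕄.M, ∃ Q : ZFSet, Q ∈ 𝕄.M ∧ Q.toSet ⊆ F.P ∧ (∀ x : ZFSet, x ∈ X → x ∈ Q) ∧
      F.one ∈ Q ∧ ∃ f : ZFSet → ZFSet,
        (∀ u ∈ F.P, ∀ v : ZFSet, (f u = v ↔ X.pair (y.pair (u.pair v)) ∈ Pi)) ∧
        IsProjectionResp F.P F.le F.one Q.toSet X.toSet f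

/-- `p ⊩ σ ⊆ τ` for the forcing with domain `S` and ordering `le`. -/
def ForcesSubset (𝕄 : GBModel) (S : Set ZFSet) (le : ZFSet → ZFSet → Prop)
    (p σ τ : ZFSet) : Prop :=
  ∀ G : Set ZFSet, IsGeneric 𝕄 S le G → p ∈ G → nameEval G σ ⊆ nameEval G τ

/-! ### Bounded names, turning proper classes into sets -/

/-- The possible values of the name `σ` in generic extensions. -/
def PossibleValues (𝕄 : GBModel) (S : Set ZFSet) (le : ZFSet → ZFSet → Prop)
    (σ : ZFSet) : Set ZFSet :=
  {x | ∃ G : Set ZFSet, IsGeneric 𝕄 S le G ∧ nameEval G σ = x}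

/-- The name `σ` is bounded: some `A ∈ M` covers all its possible values lying in `M`. -/
def IsBoundedName (𝕄 : GBModel) (F : ClassForcing 𝕄) (σ : ZFSet) : Prop :=
  ∃ A ∈ 𝕄.M, PossibleValues 𝕄 F.P F.le σ ∩ 𝕄.M ⊆ A.toSet

/-- `ℙ` has bounded names: every `ℙ`-name in `M` is bounded. -/
def HasBoundedNames (𝕄 : GBModel) (F : ClassForcing 𝕄) : Prop :=
  ∀ σ : ZFSet, σ ∈ 𝕄.M → IsName F.P σ → IsBoundedName 𝕄 F σ

/-- `X` is a proper class of `𝕄`: a class of `𝕄` that is not (the extension of) a set of `𝕄`. -/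
def IsProperClass (𝕄 : GBModel) (X : Set ZFSet) : Prop :=
  X ∈ 𝕄.Cls ∧ ¬ ∃ x ∈ 𝕄.M, x.toSet = X

/-- The proper class `X` of `𝕄` is turned into a set by forcing with `ℙ`: some `ℙ`-name in `M`
evaluates to `X` under some generic filter. -/
def TurnsIntoSet (𝕄 : GBModel) (F : ClassForcing 𝕄) (X : Set ZFSet) : Prop :=
  ∃ σ : ZFSet, σ ∈ 𝕄.M ∧ IsName F.P σ ∧
    ∃ G : Set ZFSet, IsGeneric 𝕄 F.P F.le G ∧ (nameEval G σ).toSet = X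

/-! ### Functions and partial functions as sets, collapse forcings -/

/-- `p` is a partial function from (a subset of) `γ` into the class `Y`. -/
def IsPFunOn (p γ : ZFSet) (Y : Set ZFSet) : Prop :=
  (∀ x : ZFSet, x ∈ p → ∃ a b : ZFSet, x = a.pair b ∧ a ∈ γ ∧ b ∈ Y) ∧
  ∀ a b b' : ZFSet, a.pair b ∈ p → a.pair b' ∈ p → b = b'

/-- The domain of a set of pairs. -/
def pdom (p : ZFSet) : Set ZFSet := {a | ∃ b : ZFSet, a.pair b ∈ p}

/-- `f` is (the graph of) an injective function from `X` into `Y`. -/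
def ZInjFun (f : ZFSet) (X Y : Set ZFSet) : Prop :=
  (∀ x : ZFSet, x ∈ f → ∃ a b : ZFSet, x = a.pair b ∧ a ∈ X ∧ b ∈ Y) ∧
  (∀ a b b' : ZFSet, a.pair b ∈ f → a.pair b' ∈ f → b = b') ∧
  (∀ a ∈ X, ∃ b : ZFSet, a.pair b ∈ f) ∧
  (∀ a a' b : ZFSet, a.pair b ∈ f → a'.pair b ∈ f → a = a')

/-- `D` has size less than the cardinality of `γ` in the sense of `M`:
no function of `M` injects `γ` into `D`. -/
def SmallerThan (𝕄 : GBModel) (γ : ZFSet) (D : Set ZFSet) : Prop :=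
  ¬ ∃ f ∈ 𝕄.M, ZInjFun f γ.toSet D

/-- Conditions of `Col(γ, Y)^M`: partial functions of `M` from `γ` to `Y` whose domain has
size less than the cardinality of `γ` in `M`. -/
def ColCond (𝕄 : GBModel) (γ : ZFSet) (Y : Set ZFSet) (p : ZFSet) : Prop :=
  p ∈ 𝕄.M ∧ IsPFunOn p γ Y ∧ SmallerThan 𝕄 γ (pdom p)

/-- Conditions of `Col₋*(γ, Y)^M`: those conditions of `Col(γ, Y)^M` whose domain is
an ordinal. -/
def ColStarCond (𝕄 : GBModel) (γ : ZFSet) (Y : Set ZFSet) (p : ZFSet) : Prop :=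
  ColCond 𝕄 γ Y p ∧ ∃ β : ZFSet, β.IsOrdinal ∧ pdom p = β.toSet

/-- `f` is (the graph of) a function with domain `I`. -/
def ZFuncOn (f I : ZFSet) : Prop :=
  (∀ x : ZFSet, x ∈ f → ∃ a b : ZFSet, x = a.pair b ∧ a ∈ I) ∧
  (∀ a b b' : ZFSet, a.pair b ∈ f → a.pair b' ∈ f → b = b') ∧
  (∀ a : ZFSet, a ∈ I → ∃ b : ZFSet, a.pair b ∈ f)

/-- Application of a set-function to an argument (junk value `∅` if undefined). -/
def zapp (f i : ZFSet) : ZFSet :=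
  if h : ∃ b : ZFSet, i.pair b ∈ f then h.choose else ∅

/-! ### Pretameness -/

/-- `ℙ` is pretame for `𝕄`: for every `p ∈ ℙ`, `I ∈ M` and every `𝒞`-coded sequence
`⟨D_i | i ∈ I⟩` (coded as the class of pairs `⟨i, x⟩` with `x ∈ D_i`) of dense subclasses
of `ℙ`, there are `q ≤ p` and `⟨d_i | i ∈ I⟩ ∈ M` with `d_i ⊆ D_i` predense below `q`. -/
def Pretame (𝕄 : GBModel) (F : ClassForcing 𝕄) : Prop :=
  ∀ p ∈ F.P, ∀ I : ZFSet, I ∈ 𝕄.M → ∀ D ∈ 𝕄.Cls,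
    (∀ i : ZFSet, i ∈ I →
      (∀ x : ZFSet, i.pair x ∈ D → x ∈ F.P) ∧ ∀ r ∈ F.P, ∃ s : ZFSet, i.pair s ∈ D ∧ F.le s r) →
    ∃ q ∈ F.P, F.le q p ∧ ∃ d ∈ 𝕄.M, ZFuncOn d I ∧
      ∀ i : ZFSet, i ∈ I → (∀ x : ZFSet, x ∈ zapp d i → i.pair x ∈ D) ∧
        ∀ r ∈ F.P, F.le r q → ∃ a : ZFSet, a ∈ zapp d i ∧ Compat F.P F.le r a

/-! ### The specific forcings of Sections 6 and 7 -/

/-- Conditions of Definition 6.8: (not necessarily finite) partial functions from `ω` to `2`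
lying in `M`. -/
def PCond (𝕄 : GBModel) (p : ZFSet) : Prop :=
  p ∈ 𝕄.M ∧ IsPFunOn p ZFSet.omega {x : ZFSet | x = ∅ ∨ x = ({∅} : ZFSet)}

/-- Conditions of the finite support product `ℚ` of `ω` many copies of `ℙ`:
finite sequences `⟨p₀, …, p_k⟩` of `ℙ`-conditions. -/
def QCond (𝕄 : GBModel) (s : ZFSet) : Prop :=
  s ∈ 𝕄.M ∧ ∃ n : ZFSet, n ∈ ZFSet.omega ∧ ZFuncOn s n ∧
    ∀ i : ZFSet, i ∈ n → PCond 𝕄 (zapp s i)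

/-- The coordinatewise ordering on `ℚ`. -/
def QLe (s' s : ZFSet) : Prop :=
  pdom s ⊆ pdom s' ∧ ∀ i ∈ pdom s, zapp s i ⊆ zapp s' i

/-- The power class `𝒫(ω)^M`. -/
def PowOmega (𝕄 : GBModel) : Set ZFSet :=
  {x : ZFSet | x ∈ 𝕄.M ∧ x ⊆ ZFSet.omega}

/-- `X ⊆ M` is definable over `⟨M, ∈⟩` (from set parameters). -/
def DefinableOver (Mset : Set ZFSet) (X : Set ZFSet) : Prop :=
  ∃ (φ : EFormula) (v : ℕ → ZFSet), (∀ n, v n ∈ Mset) ∧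
    X = {x : ZFSet | x ∈ Mset ∧ EFormula.Sat Mset (Function.update v 0 x) φ}

/-- Every set of `M` is countable in `M`: it injects into `ω` by a function of `M`. -/
def AllSetsCountable (𝕄 : GBModel) : Prop :=
  ∀ x ∈ 𝕄.M, ∃ f ∈ 𝕄.M, ZInjFun f x.toSet ZFSet.omega.toSet


/-! ### Definability calculus -/

section Calculus

variable (𝕄 : GBModel)

theorem exists_enum : ∃ Cs : ℕ → Set ZFSet, Set.range Cs = 𝕄.Cls := by
  obtain ⟨f, hf⟩ := 𝕄.countable_Cls.exists_eq_range ⟨_, 𝕄.sets_are_classes ∅ 𝕄.empty_mem⟩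
  exact ⟨f, hf.symm⟩

/-- A fixed enumeration of the classes of the model. -/
def enumC : ℕ → Set ZFSet := (exists_enum 𝕄).choose

theorem enumC_range : Set.range (enumC 𝕄) = 𝕄.Cls := (exists_enum 𝕄).choose_spec

theorem enumC_mem (n : ℕ) : enumC 𝕄 n ∈ 𝕄.Cls := by
  rw [← enumC_range]; exact ⟨n, rfl⟩

def drp {n : ℕ} (w : Fin (n + 1) → ZFSet) : Fin n → ZFSet := fun i => w i.castSucc

def snc {α : Type*} {n : ℕ} (w : Fin n → α) (x : α) : Fin (n + 1) → α :=
  fun i => if h : i.1 < n then w ⟨i.1, h⟩ else x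

@[simp] theorem drp_snc {n : ℕ} (w : Fin n → ZFSet) (x : ZFSet) : drp (snc w x) = w := by
  funext i; simp [drp, snc]

@[simp] theorem snc_last {α : Type*} {n : ℕ} (w : Fin n → α) (x : α) :
    snc w x (Fin.last n) = x := by simp [snc]

@[simp] theorem drp_comp {α : Type*} {n : ℕ} (g : α → ZFSet) (w : Fin n → α) (x : α) :
    drp (fun i => g (snc w x i)) = fun i => g (w i) := by
  funext i; simp [drp, snc]

theorem snc_mem {n : ℕ} {w : Fin n → ZFSet} {x : ZFSet} (hw : ∀ i, w i ∈ 𝕄.M) (hx : x ∈ 𝕄.M) :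
    ∀ i, snc w x i ∈ 𝕄.M := by
  intro i; unfold snc; split_ifs <;> simp [*]

def Dfn (n : ℕ) (P : (Fin n → ZFSet) → Prop) : Prop :=
  ∀ ρ : Fin n → ℕ, ∃ φ : GBFormula, ∀ v : ℕ → ZFSet, (∀ i, v i ∈ 𝕄.M) →
    (GBFormula.Sat 𝕄.M (enumC 𝕄) v φ ↔ P (fun i => v (ρ i)))

def DT (n : ℕ) (t : (Fin n → ZFSet) → ZFSet) : Prop :=
  (∀ w, (∀ i, w i ∈ 𝕄.M) → t w ∈ 𝕄.M) ∧ Dfn 𝕄 (n + 1) (fun w => w (Fin.last n) = t (drp w))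

variable {𝕄} {n : ℕ}

theorem Dfn.congr {P Q : (Fin n → ZFSet) → Prop} (h : Dfn 𝕄 n P)
    (e : ∀ w, (∀ i, w i ∈ 𝕄.M) → (P w ↔ Q w)) : Dfn 𝕄 n Q := by
  intro ρ
  obtain ⟨φ, hφ⟩ := h ρ
  exact ⟨φ, fun v hv => (hφ v hv).trans (e _ fun i => hv _)⟩

theorem Dfn.reindex {m : ℕ} {P : (Fin n → ZFSet) → Prop} (h : Dfn 𝕄 n P) (ρ : Fin n → Fin m) :
    Dfn 𝕄 m (fun w => P (fun i => w (ρ i))) :=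
  fun ρ' => h (fun i => ρ' (ρ i))

theorem Dfn.not {P : (Fin n → ZFSet) → Prop} (h : Dfn 𝕄 n P) : Dfn 𝕄 n (fun w => ¬ P w) := by
  intro ρ
  obtain ⟨φ, hφ⟩ := h ρ
  exact ⟨.not φ, fun v hv => not_congr (hφ v hv)⟩

theorem Dfn.or {P Q : (Fin n → ZFSet) → Prop} (h : Dfn 𝕄 n P) (h' : Dfn 𝕄 n Q) :
    Dfn 𝕄 n (fun w => P w ∨ Q w) := by
  intro ρ
  obtain ⟨φ, hφ⟩ := h ρ
  obtain ⟨ψ, hψ⟩ := h' ρ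
  exact ⟨.or φ ψ, fun v hv => or_congr (hφ v hv) (hψ v hv)⟩

theorem Dfn.and {P Q : (Fin n → ZFSet) → Prop} (h : Dfn 𝕄 n P) (h' : Dfn 𝕄 n Q) :
    Dfn 𝕄 n (fun w => P w ∧ Q w) :=
  (h.not.or h'.not).not.congr fun w _ => by tauto

theorem Dfn.imp {P Q : (Fin n → ZFSet) → Prop} (h : Dfn 𝕄 n P) (h' : Dfn 𝕄 n Q) :
    Dfn 𝕄 n (fun w => P w → Q w) :=
  (h.not.or h').congr fun w _ => by tauto

theorem Dfn.iff {P Q : (Fin n → ZFSet) → Prop} (h : Dfn 𝕄 n P) (h' : Dfn 𝕄 n Q) :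
    Dfn 𝕄 n (fun w => P w ↔ Q w) :=
  ((h.imp h').and (h'.imp h)).congr fun w _ => by tauto

theorem Dfn.ex {Q : (Fin n → ZFSet) → ZFSet → Prop}
    (h : Dfn 𝕄 (n + 1) (fun w => Q (drp w) (w (Fin.last n)))) :
    Dfn 𝕄 n (fun w => ∃ x ∈ 𝕄.M, Q w x) := by
  intro ρ
  let m := Finset.univ.sup ρ + 1
  have hm : ∀ i, ρ i < m := fun i => Nat.lt_succ_of_le (Finset.le_sup (Finset.mem_univ i))
  obtain ⟨φ, hφ⟩ := h (snc ρ m)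
  refine ⟨.ex m φ, fun v hv => ?_⟩
  simp only [GBFormula.Sat]
  refine exists_congr fun x => and_congr_right fun hx => ?_
  rw [hφ]
  · have e1 : ∀ i : Fin n, Function.update v m x (ρ i) = v (ρ i) := fun i => by
      rw [Function.update_of_ne (hm i).ne]
    simp [e1]
  · intro i
    by_cases hi : i = m
    · subst hi; simpa using hx
    · rw [Function.update_of_ne hi]; exact hv i

theorem Dfn.all {Q : (Fin n → ZFSet) → ZFSet → Prop}
    (h : Dfn 𝕄 (n + 1) (fun w => Q (drp w) (w (Fin.last n)))) :
    Dfn 𝕄 n (fun w => ∀ x ∈ 𝕄.M, Q w x) :=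
  (Dfn.ex (Q := fun w x => ¬ Q w x) h.not).not.congr fun w _ => by simp

theorem DT.var (i : Fin n) : DT 𝕄 n (fun w => w i) :=
  ⟨fun w hw => hw i, fun ρ => ⟨.eq (ρ (Fin.last n)) (ρ i.castSucc), fun v _ => Iff.rfl⟩⟩

theorem DT.lft {t : (Fin n → ZFSet) → ZFSet} (h : DT 𝕄 n t) :
    DT 𝕄 (n + 1) (fun w => t (drp w)) := by
  refine ⟨fun w hw => h.1 _ fun i => hw _, ?_⟩
  have := h.2.reindex (m := n + 2)
    (snc (fun i => i.castSucc.castSucc) (Fin.last _))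
  refine this.congr fun w hw => ?_
  simp
  rfl

/-- the graph of a definable term, with an explicit value variable -/
theorem DT.graph {t : (Fin n → ZFSet) → ZFSet} (h : DT 𝕄 n t) (j : Fin n) :
    Dfn 𝕄 n (fun w => w j = t w) := by
  have := h.2.reindex (m := n) (snc (fun i => i) j)
  refine this.congr fun w hw => ?_
  simp

theorem Dfn.mem {s t : (Fin n → ZFSet) → ZFSet} (hs : DT 𝕄 n s) (ht : DT 𝕄 n t) :
    Dfn 𝕄 n (fun w => s w ∈ t w) := by
  have key : Dfn 𝕄 n (fun w => ∃ x ∈ 𝕄.M, ∃ y ∈ 𝕄.M, x = s w ∧ y = t w ∧ x ∈ y) := by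
    refine .ex (.ex (.and ?_ (.and ?_ ?_)))
    · exact (hs.lft.lft).graph (Fin.last n).castSucc
    · exact (ht.lft.lft).graph (Fin.last _)
    · exact fun ρ => ⟨.mem (ρ (Fin.last n).castSucc) (ρ (Fin.last _)), fun v _ => Iff.rfl⟩
  refine key.congr fun w hw => ⟨?_, fun h => ⟨_, hs.1 w hw, _, ht.1 w hw, rfl, rfl, h⟩⟩
  rintro ⟨x, -, y, -, rfl, rfl, h⟩; exact h

theorem Dfn.eq {s t : (Fin n → ZFSet) → ZFSet} (hs : DT 𝕄 n s) (ht : DT 𝕄 n t) :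
    Dfn 𝕄 n (fun w => s w = t w) := by
  have key : Dfn 𝕄 n (fun w => ∃ x ∈ 𝕄.M, x = s w ∧ x = t w) := by
    refine .ex (.and ?_ ?_)
    · exact (hs.lft).graph (Fin.last n)
    · exact (ht.lft).graph (Fin.last _)
  refine key.congr fun w hw => ⟨?_, fun h => ⟨_, hs.1 w hw, rfl, h⟩⟩
  rintro ⟨x, -, rfl, h⟩; exact h

theorem Dfn.cls {C : Set ZFSet} (hC : C ∈ 𝕄.Cls) {t : (Fin n → ZFSet) → ZFSet} (ht : DT 𝕄 n t) :
    Dfn 𝕄 n (fun w => t w ∈ C) := by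
  rw [← enumC_range] at hC
  obtain ⟨j, rfl⟩ := hC
  have key : Dfn 𝕄 n (fun w => ∃ x ∈ 𝕄.M, x = t w ∧ x ∈ enumC 𝕄 j) := by
    refine .ex (.and ?_ ?_)
    · exact (ht.lft).graph (Fin.last n)
    · exact fun ρ => ⟨.cls (ρ (Fin.last n)) j, fun v _ => Iff.rfl⟩
  refine key.congr fun w hw => ⟨?_, fun h => ⟨_, ht.1 w hw, rfl, h⟩⟩
  rintro ⟨x, -, rfl, h⟩; exact h

theorem Dfn.exB {t : (Fin n → ZFSet) → ZFSet} (ht : DT 𝕄 n t)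
    {Q : (Fin n → ZFSet) → ZFSet → Prop}
    (h : Dfn 𝕄 (n + 1) (fun w => Q (drp w) (w (Fin.last n)))) :
    Dfn 𝕄 n (fun w => ∃ x ∈ t w, Q w x) :=
  (Dfn.ex (Q := fun w x => x ∈ t w ∧ Q w x) ((Dfn.mem (.var _) ht.lft).and h)).congr fun w hw => by
    refine exists_congr fun x => ⟨fun h => h.2, fun h => ⟨𝕄.transitive _ (ht.1 w hw) _ h.1, h⟩⟩

theorem Dfn.allB {t : (Fin n → ZFSet) → ZFSet} (ht : DT 𝕄 n t)
    {Q : (Fin n → ZFSet) → ZFSet → Prop}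
    (h : Dfn 𝕄 (n + 1) (fun w => Q (drp w) (w (Fin.last n)))) :
    Dfn 𝕄 n (fun w => ∀ x ∈ t w, Q w x) :=
  (Dfn.exB ht (Q := fun w x => ¬ Q w x) h.not).not.congr fun w _ => by simp

theorem Dfn.toCls {P : (Fin (n + 1) → ZFSet) → Prop} (h : Dfn 𝕄 (n + 1) P)
    {w : Fin n → ZFSet} (hw : ∀ i, w i ∈ 𝕄.M) :
    {x : ZFSet | x ∈ 𝕄.M ∧ P (snc w x)} ∈ 𝕄.Cls := by
  obtain ⟨φ, hφ⟩ := h (fun i => if i.1 < n then i.1 + 1 else 0)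
  let v : ℕ → ZFSet := fun i => if h : i - 1 < n then w ⟨i - 1, h⟩ else ∅
  have hv : ∀ i, v i ∈ 𝕄.M := by
    intro i; simp only [v]; split_ifs
    · exact hw _
    · exact 𝕄.empty_mem
  convert 𝕄.comprehension φ v (enumC 𝕄) hv (enumC_mem 𝕄) using 1
  ext x
  refine and_congr_right fun hx => ?_
  rw [hφ]
  · apply iff_of_eq
    congr 1
    funext i
    unfold snc
    by_cases h : i.1 < n
    · simp [h, v]
    · simp [h]
  · intro i
    by_cases hi : i = 0
    · subst hi; simpa using hx
    · rw [Function.update_of_ne hi]; exact hv i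

theorem DT.of_mem {t : (Fin n → ZFSet) → ZFSet} (h : ∀ w, (∀ i, w i ∈ 𝕄.M) → t w ∈ 𝕄.M)
    (h' : Dfn 𝕄 (n + 1) (fun w => w (Fin.last n) ∈ t (drp w))) : DT 𝕄 n t := by
  refine ⟨h, ?_⟩
  have key : Dfn 𝕄 (n + 1) (fun w => ∀ u ∈ 𝕄.M, u ∈ w (Fin.last n) ↔ u ∈ t (drp w)) := by
    refine .all (.iff (.mem (.var _) (.var (Fin.last n).castSucc)) ?_)
    have := h'.reindex (m := n + 2) (snc (fun i => i.castSucc.castSucc) (Fin.last _))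
    refine this.congr fun w hw => ?_
    simp
    rfl
  refine key.congr fun w hw => ⟨fun e => ?_, fun e u _ => by rw [e]⟩
  ext u
  refine ⟨fun hu => (e u (𝕄.transitive _ (hw _) _ hu)).1 hu, fun hu => (e u ?_).2 hu⟩
  exact 𝕄.transitive _ (h _ fun i => hw _) _ hu

theorem DT.const {c : ZFSet} (hc : c ∈ 𝕄.M) : DT 𝕄 n (fun _ => c) := by
  refine .of_mem (fun _ _ => hc) ?_
  exact Dfn.cls (𝕄.sets_are_classes c hc) (.var _)

theorem DT.upair {s t : (Fin n → ZFSet) → ZFSet} (hs : DT 𝕄 n s) (ht : DT 𝕄 n t) :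
    DT 𝕄 n (fun w => ({s w, t w} : ZFSet)) := by
  refine .of_mem (fun w hw => 𝕄.pair_mem _ (hs.1 w hw) _ (ht.1 w hw)) ?_
  exact ((Dfn.eq (.var (Fin.last n)) hs.lft).or (Dfn.eq (.var (Fin.last n)) ht.lft)).congr fun w _ => by simp

theorem DT.sing {s : (Fin n → ZFSet) → ZFSet} (hs : DT 𝕄 n s) :
    DT 𝕄 n (fun w => ({s w} : ZFSet)) := by
  have := DT.upair hs hs
  simpa using this

theorem DT.pair {s t : (Fin n → ZFSet) → ZFSet} (hs : DT 𝕄 n s) (ht : DT 𝕄 n t) :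
    DT 𝕄 n (fun w => (s w).pair (t w)) :=
  DT.upair hs.sing (DT.upair hs ht)

theorem DT.sUn {s : (Fin n → ZFSet) → ZFSet} (hs : DT 𝕄 n s) :
    DT 𝕄 n (fun w => (⋃₀ (s w) : ZFSet)) := by
  refine .of_mem (fun w hw => 𝕄.sUnion_mem _ (hs.1 w hw)) ?_
  refine (Dfn.exB hs.lft (Q := fun w x => w (Fin.last n) ∈ x)
    (.mem (.var (Fin.last n).castSucc) (.var _))).congr fun w _ => by simp

theorem DT.un {s t : (Fin n → ZFSet) → ZFSet} (hs : DT 𝕄 n s) (ht : DT 𝕄 n t) :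
    DT 𝕄 n (fun w => s w ∪ t w) :=
  DT.sUn (DT.upair hs ht)

theorem DT.ins {s t : (Fin n → ZFSet) → ZFSet} (hs : DT 𝕄 n s) (ht : DT 𝕄 n t) :
    DT 𝕄 n (fun w => insert (s w) (t w)) := by
  simpa only [ZFSet.insert_eq] using DT.un hs.sing ht

theorem DT.sep {a : (Fin n → ZFSet) → ZFSet} (ha : DT 𝕄 n a)
    {Q : (Fin n → ZFSet) → ZFSet → Prop}
    (h : Dfn 𝕄 (n + 1) (fun w => Q (drp w) (w (Fin.last n)))) :
    DT 𝕄 n (fun w => ZFSet.sep (fun x => Q w x) (a w)) := by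
  refine .of_mem (fun w hw => ?_) ?_
  · obtain ⟨b, hb, e⟩ := 𝕄.separation _ (h.toCls hw) _ (ha.1 w hw)
    convert hb
    ext x
    rw [e, ZFSet.mem_sep]
    refine and_congr_right fun hx => ?_
    simp [𝕄.transitive _ (ha.1 w hw) _ hx]
  · exact ((Dfn.mem (.var (Fin.last n)) ha.lft).and h).congr fun w _ => by simp

@[simp] theorem mem_zimage {f : ZFSet → ZFSet} {x y : ZFSet} :
    y ∈ zimage f x ↔ ∃ z ∈ x, f z = y := by
  unfold zimage
  exact @ZFSet.mem_image f (Classical.allZFSetDefinable _) x y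

theorem DT.img {a : (Fin n → ZFSet) → ZFSet} (ha : DT 𝕄 n a)
    {F : (Fin n → ZFSet) → ZFSet → ZFSet}
    (hF : DT 𝕄 (n + 1) (fun w => F (drp w) (w (Fin.last n)))) :
    DT 𝕄 n (fun w => zimage (fun x => F w x) (a w)) := by
  have hF' : DT 𝕄 (n + 2) (fun w => F (drp (drp w)) (w (Fin.last _))) := by
    refine ⟨fun w hw => ?_, ?_⟩
    · have := hF.1 (snc (drp (drp w)) (w (Fin.last _)))
        (snc_mem 𝕄 (fun i => hw _) (hw _))
      simpa using this
    · have := hF.2.reindex (m := n + 3)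
        (snc (snc (fun i => i.castSucc.castSucc.castSucc) (Fin.last (n+1)).castSucc) (Fin.last _))
      refine this.congr fun w hw => ?_
      simp
      rfl
  have g1 : Dfn 𝕄 (n + 1) (fun w => ∃ x ∈ 𝕄.M,
      w (Fin.last n) = x.pair (F (drp w) x)) :=
    .ex (.eq (.var (Fin.last n).castSucc) (.pair (.var _) hF'))
  have g2 : Dfn 𝕄 (n + 1) (fun w => ∃ x ∈ a (drp w), F (drp w) x = w (Fin.last n)) :=
    .exB ha.lft (.eq hF' (.var (Fin.last n).castSucc))
  refine .of_mem (fun w hw => ?_) (by simpa using g2)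
  have hFM : ∀ x ∈ 𝕄.M, F w x ∈ 𝕄.M := fun x hx => by
    simpa using hF.1 (snc w x) (snc_mem 𝕄 hw hx)
  have haM := ha.1 w hw
  have pairM : ∀ x ∈ 𝕄.M, ∀ y ∈ 𝕄.M, x.pair y ∈ 𝕄.M := fun x hx y hy =>
    𝕄.pair_mem _ (by simpa using 𝕄.pair_mem x hx x hx) _ (𝕄.pair_mem x hx y hy)
  obtain ⟨b, hb, e⟩ := 𝕄.collection _ (g1.toCls hw) _ haM (fun x hx => by
    have hxM := 𝕄.transitive _ haM _ hx
    exact ⟨F w x, hFM x hxM, pairM _ hxM _ (hFM x hxM), x, hxM, by simp⟩)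
  obtain ⟨c, hc, e'⟩ := 𝕄.separation _ (g2.toCls hw) _ hb
  convert hc
  ext y
  rw [e', mem_zimage]
  constructor
  · rintro ⟨x, hx, rfl⟩
    have hxM := 𝕄.transitive _ haM _ hx
    obtain ⟨y, hy, -, x', -, h⟩ := e x hx
    simp only [snc_last, drp_snc, ZFSet.pair_inj] at h
    obtain ⟨rfl, rfl⟩ := h
    exact ⟨hy, hFM x hxM, x, by simpa using hx, by simp⟩
  · rintro ⟨_, _, x, hx, h⟩
    exact ⟨x, by simpa using hx, by simpa using h⟩

end Calculus

section Parts

variable {𝕄 : GBModel} {n : ℕ}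

theorem DT.closed {t : ZFSet} (h : DT 𝕄 0 (fun _ => t)) : t ∈ 𝕄.M :=
  h.1 (fun _ => ∅) (fun _ => 𝕄.empty_mem)

theorem one_mem_M : ({∅} : ZFSet) ∈ 𝕄.M := by
  simpa using 𝕄.pair_mem ∅ 𝕄.empty_mem ∅ 𝕄.empty_mem

/-! #### Natural numbers -/

def nat : ℕ → ZFSet
  | 0 => ∅
  | k + 1 => insert (nat k) (nat k)

theorem mem_omega {x : ZFSet} : x ∈ ZFSet.omega ↔ ∃ k, x = nat k := by
  have h : ∀ k, nat k = ZFSet.mk (PSet.ofNat k) := by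
    intro k
    induction k with
    | zero => rfl
    | succ k ih => simp only [nat, ih]; rfl
  constructor
  · refine Quotient.inductionOn x fun y hy => ?_
    obtain ⟨⟨k⟩, hk⟩ := hy
    exact ⟨k, by rw [h]; exact ZFSet.sound hk⟩
  · rintro ⟨k, rfl⟩
    induction k with
    | zero => exact ZFSet.omega_zero
    | succ k ih => exact ZFSet.omega_succ ih

theorem mem_nat {x : ZFSet} {k : ℕ} : x ∈ nat k ↔ ∃ j < k, x = nat j := by
  induction k with
  | zero => simp [nat]
  | succ k ih =>
    simp only [nat, ZFSet.mem_insert_iff, ih]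
    constructor
    · rintro (rfl | ⟨j, hj, rfl⟩)
      · exact ⟨k, by omega, rfl⟩
      · exact ⟨j, by omega, rfl⟩
    · rintro ⟨j, hj, rfl⟩
      rcases Nat.lt_succ_iff_lt_or_eq.1 hj with h | rfl
      · exact .inr ⟨j, h, rfl⟩
      · exact .inl rfl

theorem nat_inj {j k : ℕ} (h : nat j = nat k) : j = k := by
  rcases lt_trichotomy j k with hl | hl | hl
  · have := mem_nat.2 ⟨j, hl, rfl⟩
    rw [h] at this; exact absurd this (ZFSet.mem_irrefl _)
  · exact hl
  · have := mem_nat.2 ⟨k, hl, rfl⟩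
    rw [h] at this; exact absurd this (ZFSet.mem_irrefl _)

theorem nat_mem_omega (k : ℕ) : nat k ∈ ZFSet.omega := mem_omega.2 ⟨k, rfl⟩

theorem nat_mem_M (k : ℕ) : nat k ∈ 𝕄.M := 𝕄.transitive _ 𝕄.omega_mem _ (nat_mem_omega k)

theorem nat_union (j k : ℕ) : nat j ∪ nat k = nat (max j k) := by
  ext x
  simp only [ZFSet.mem_union, mem_nat]
  constructor
  · rintro (⟨i, h, rfl⟩ | ⟨i, h, rfl⟩)
    · exact ⟨i, by omega, rfl⟩
    · exact ⟨i, by omega, rfl⟩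
  · rintro ⟨i, h, rfl⟩
    rcases lt_max_iff.1 h with h | h
    · exact .inl ⟨i, h, rfl⟩
    · exact .inr ⟨i, h, rfl⟩

/-! #### Application -/

def appT (f k : ZFSet) : ZFSet := ⋃₀ (ZFSet.sep (fun y => k.pair y ∈ f) (⋃₀ (⋃₀ f)))

theorem DT.app {f k : (Fin n → ZFSet) → ZFSet} (hf : DT 𝕄 n f) (hk : DT 𝕄 n k) :
    DT 𝕄 n (fun w => appT (f w) (k w)) :=
  .sUn (.sep (.sUn (.sUn hf)) (.mem (.pair hk.lft (.var _)) hf.lft))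

theorem mem_UU {f a b : ZFSet} (h : a.pair b ∈ f) : a ∈ (⋃₀ (⋃₀ f) : ZFSet) ∧
    b ∈ (⋃₀ (⋃₀ f) : ZFSet) := by
  have h1 : ({a, b} : ZFSet) ∈ (⋃₀ f : ZFSet) :=
    ZFSet.mem_sUnion.2 ⟨_, h, by simp [ZFSet.pair]⟩
  exact ⟨ZFSet.mem_sUnion.2 ⟨_, h1, by simp⟩, ZFSet.mem_sUnion.2 ⟨_, h1, by simp⟩⟩

theorem appT_eq {f k b : ZFSet} (h : k.pair b ∈ f) (hu : ∀ b', k.pair b' ∈ f → b' = b) :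
    appT f k = b := by
  unfold appT
  have : ZFSet.sep (fun y => k.pair y ∈ f) (⋃₀ (⋃₀ f)) = {b} := by
    ext y
    simp only [ZFSet.mem_sep, ZFSet.mem_singleton]
    exact ⟨fun h => hu _ h.2, by rintro rfl; exact ⟨(mem_UU h).2, h⟩⟩
  rw [this, ZFSet.sUnion_singleton]

theorem appT_empty {f k : ZFSet} (h : ∀ b, k.pair b ∉ f) : appT f k = ∅ := by
  unfold appT
  have : ZFSet.sep (fun y => k.pair y ∈ f) (⋃₀ (⋃₀ f)) = ∅ := by
    ext y
    simp [h]
  rw [this, ZFSet.sUnion_empty]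

theorem zapp_eq {f k b : ZFSet} (h : k.pair b ∈ f) (hu : ∀ b', k.pair b' ∈ f → b' = b) :
    zapp f k = b := by
  have h' : ∃ b, k.pair b ∈ f := ⟨b, h⟩
  unfold zapp
  rw [dif_pos h']
  exact hu _ h'.choose_spec

theorem zapp_empty {f k : ZFSet} (h : ∀ b, k.pair b ∉ f) : zapp f k = ∅ := by
  unfold zapp
  rw [dif_neg (by simpa using h)]

/-! #### Check names of natural numbers -/

def chkN : ℕ → ZFSet
  | 0 => ∅
  | k + 1 => insert ((chkN k).pair ∅) (chkN k)

theorem pair_M {x y : ZFSet} (hx : x ∈ 𝕄.M) (hy : y ∈ 𝕄.M) : x.pair y ∈ 𝕄.M :=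
  DT.closed (.pair (.const hx) (.const hy))

theorem chkN_mem (k : ℕ) : chkN k ∈ 𝕄.M := by
  induction k with
  | zero => exact 𝕄.empty_mem
  | succ k ih => exact DT.closed (.ins (.pair (.const ih) (.const 𝕄.empty_mem)) (.const ih))

/-- approximations to the function `k ↦ chkN k` -/
def Appr (𝕄 : GBModel) (f : ZFSet) : Prop :=
  ∀ z ∈ f, z = (∅ : ZFSet).pair ∅ ∨ ∃ j ∈ 𝕄.M, ∃ y ∈ 𝕄.M,
    z = (insert j j : ZFSet).pair (insert (y.pair ∅) y) ∧ j.pair y ∈ f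

theorem succ_ne_empty (x : ZFSet) : (insert x x : ZFSet) ≠ ∅ := fun h => by
  have : x ∈ (insert x x : ZFSet) := ZFSet.mem_insert _ _
  rw [h] at this; exact ZFSet.notMem_empty _ this

theorem succ_inj' {x y : ZFSet} (h : (insert x x : ZFSet) = insert y y) : x = y := by
  have h1 : x ∈ (insert y y : ZFSet) := h ▸ ZFSet.mem_insert x x
  have h2 : y ∈ (insert x x : ZFSet) := h ▸ ZFSet.mem_insert y y
  rw [ZFSet.mem_insert_iff] at h1 h2
  rcases h1 with h1 | h1
  · exact h1
  rcases h2 with h2 | h2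
  · exact h2.symm
  · exact absurd h1 (ZFSet.mem_asymm h2)

theorem Appr.eq {f : ZFSet} (hf : Appr 𝕄 f) (k : ℕ) : ∀ y, (nat k).pair y ∈ f → y = chkN k := by
  induction k with
  | zero =>
    intro y hy
    rcases hf _ hy with h | ⟨j, -, y', -, h, -⟩
    · exact (ZFSet.pair_inj.1 h).2
    · exact absurd (ZFSet.pair_inj.1 h).1.symm (succ_ne_empty j)
  | succ k ih =>
    intro y hy
    rcases hf _ hy with h | ⟨j, -, y', -, h, h'⟩
    · exact absurd (ZFSet.pair_inj.1 h).1 (succ_ne_empty _)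
    · obtain ⟨h1, rfl⟩ := ZFSet.pair_inj.1 h
      have := succ_inj' h1
      subst this
      rw [ih _ h', chkN]

theorem Appr.exists (k : ℕ) : ∃ f ∈ 𝕄.M, Appr 𝕄 f ∧ (nat k).pair (chkN k) ∈ f := by
  induction k with
  | zero =>
    refine ⟨{(∅ : ZFSet).pair ∅},
      DT.closed (.sing (.pair (.const 𝕄.empty_mem) (.const 𝕄.empty_mem))), ?_, ?_⟩
    · intro z hz
      exact .inl (by simpa using hz)
    · simp [nat, chkN]
  | succ k ih =>
    obtain ⟨f, hf, hA, hk⟩ := ih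
    refine ⟨insert ((nat (k + 1)).pair (chkN (k + 1))) f,
      DT.closed (.ins (.const (pair_M (nat_mem_M _) (chkN_mem _))) (.const hf)), ?_, by simp⟩
    intro z hz
    rw [ZFSet.mem_insert_iff] at hz
    rcases hz with rfl | hz
    · exact .inr ⟨nat k, nat_mem_M _, chkN k, chkN_mem _, rfl, by simp [hk]⟩
    · rcases hA z hz with h | ⟨j, hj, y, hy, h, h'⟩
      · exact .inl h
      · exact .inr ⟨j, hj, y, hy, h, by simp [h']⟩

theorem chkFun_exists : ∃ f ∈ 𝕄.M, ∀ k, appT f (nat k) = chkN k := by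
  have hD : Dfn 𝕄 1 (fun w => ∃ f ∈ 𝕄.M, (∀ z ∈ f, z = (∅ : ZFSet).pair ∅ ∨
      ∃ j ∈ 𝕄.M, ∃ y ∈ 𝕄.M,
      z = (insert j j : ZFSet).pair (insert (y.pair ∅) y) ∧ j.pair y ∈ f) ∧
      w (Fin.last 0) ∈ f) := by
    have e : ∀ {m}, DT 𝕄 m (fun _ => ∅) := .const 𝕄.empty_mem
    refine .ex (.and (.allB (.var _) (.or (.eq (.var _) (.pair e e)) (.ex (.ex (.and ?_ ?_)))))
      (.mem (.var (Fin.castSucc _)) (.var _)))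
    · exact .eq (.var (Fin.castSucc (Fin.castSucc _)))
        (.pair (.ins (.var (Fin.castSucc _)) (.var (Fin.castSucc _)))
          (.ins (.pair (.var (Fin.last _)) e) (.var (Fin.last _))))
    · exact .mem (.pair (.var (Fin.castSucc _)) (.var (Fin.last _)))
        (.var (Fin.castSucc (Fin.castSucc (Fin.castSucc _))))
  have hC := hD.toCls (w := fun _ => ∅) (fun _ => 𝕄.empty_mem)
  simp only [snc_last] at hC
  obtain ⟨b, hb, e⟩ := 𝕄.collection _ hC _ 𝕄.omega_mem (by
    intro x hx
    obtain ⟨k, rfl⟩ := mem_omega.1 hx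
    obtain ⟨f, hf, hA, hk⟩ := Appr.exists (𝕄 := 𝕄) k
    exact ⟨chkN k, chkN_mem k, 𝕄.transitive _ hf _ hk, f, hf, hA, hk⟩)
  -- restrict to the pairs lying in the class
  have hu : ∀ k y, (nat k).pair y ∈ {x | x ∈ 𝕄.M ∧ ∃ f ∈ 𝕄.M, (∀ z ∈ f, z = (∅ : ZFSet).pair ∅ ∨
      ∃ j ∈ 𝕄.M, ∃ y ∈ 𝕄.M,
      z = (insert j j : ZFSet).pair (insert (y.pair ∅) y) ∧ j.pair y ∈ f) ∧ x ∈ f} →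
      y = chkN k := by
    rintro k y ⟨-, f, -, hA, hy⟩
    exact Appr.eq (𝕄 := 𝕄) hA k y hy
  generalize {x | x ∈ 𝕄.M ∧ ∃ f ∈ 𝕄.M, (∀ z ∈ f, z = (∅ : ZFSet).pair ∅ ∨
      ∃ j ∈ 𝕄.M, ∃ y ∈ 𝕄.M,
      z = (insert j j : ZFSet).pair (insert (y.pair ∅) y) ∧ j.pair y ∈ f) ∧ x ∈ f} = C
    at hC e hu
  refine ⟨zimage (fun k => k.pair (⋃₀ (ZFSet.sep (fun y => k.pair y ∈ C) b))) ZFSet.omega,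
    DT.closed (.img (.const 𝕄.omega_mem) (.pair (.var _) (.sUn (.sep (.const hb)
      (.cls hC (.pair (.var (Fin.castSucc _)) (.var _))))))), fun k => ?_⟩
  have hk : (⋃₀ (ZFSet.sep (fun y => (nat k).pair y ∈ C) b) : ZFSet) = chkN k := by
    have : ZFSet.sep (fun y => (nat k).pair y ∈ C) b = {chkN k} := by
      ext y
      simp only [ZFSet.mem_sep, ZFSet.mem_singleton]
      refine ⟨fun h => hu _ _ h.2, ?_⟩
      rintro rfl
      obtain ⟨y, hy, hy'⟩ := e (nat k) (nat_mem_omega k)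
      rw [← hu _ _ hy']
      exact ⟨hy, hy'⟩
    rw [this, ZFSet.sUnion_singleton]
  apply appT_eq
  · rw [mem_zimage]
    exact ⟨nat k, nat_mem_omega k, by rw [hk]⟩
  · intro b' hb'
    rw [mem_zimage] at hb'
    obtain ⟨z, -, h⟩ := hb'
    obtain ⟨rfl, rfl⟩ := ZFSet.pair_inj.1 h
    exact hk

/-! #### Names -/

theorem rank_lt_of_pair {σ τ p : ZFSet} (h : τ.pair p ∈ σ) : τ.rank < σ.rank := by
  have h1 : ({τ} : ZFSet).rank < (τ.pair p).rank := ZFSet.rank_lt_of_mem (by simp [ZFSet.pair])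
  have h2 : τ.rank < ({τ} : ZFSet).rank := ZFSet.rank_lt_of_mem (by simp)
  exact h2.trans (h1.trans (ZFSet.rank_lt_of_mem h))

theorem mem_nameEval {G : Set ZFSet} {σ x : ZFSet} :
    x ∈ nameEval G σ ↔ ∃ τ p, p ∈ G ∧ τ.pair p ∈ σ ∧ nameEval G τ = x := by
  unfold nameEval
  rw [nameEvalAux, mem_zimage]
  constructor
  · rintro ⟨τ, hτ, h⟩
    obtain ⟨-, p, hp, hσ⟩ := ZFSet.mem_sep.1 hτ
    rw [dif_pos (rank_lt_of_pair hσ)] at h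
    exact ⟨τ, p, hp, hσ, h⟩
  · rintro ⟨τ, p, hp, hσ, h⟩
    refine ⟨τ, ZFSet.mem_sep.2 ⟨(mem_UU hσ).1, p, hp, hσ⟩, ?_⟩
    rw [dif_pos (rank_lt_of_pair hσ)]
    exact h

theorem isName_of {S : Set ZFSet} {σ : ZFSet}
    (h : ∀ x ∈ σ, ∃ τ p : ZFSet, x = τ.pair p ∧ p ∈ S ∧ IsName S τ) : IsName S σ := by
  unfold IsName
  rw [IsNameAux]
  intro x hx
  obtain ⟨τ, p, rfl, hp, hn⟩ := h x hx
  exact ⟨τ, p, rfl, hp, rank_lt_of_pair hx, hn⟩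

theorem chkN_elem {k : ℕ} {x : ZFSet} : x ∈ chkN k ↔ ∃ j < k, x = (chkN j).pair ∅ := by
  induction k with
  | zero => simp [chkN]
  | succ k ih =>
    simp only [chkN, ZFSet.mem_insert_iff, ih]
    constructor
    · rintro (rfl | ⟨j, hj, rfl⟩)
      · exact ⟨k, by omega, rfl⟩
      · exact ⟨j, by omega, rfl⟩
    · rintro ⟨j, hj, rfl⟩
      rcases Nat.lt_succ_iff_lt_or_eq.1 hj with h | rfl
      · exact .inr ⟨j, h, rfl⟩
      · exact .inl rfl

theorem chkN_name {S : Set ZFSet} (h : ∅ ∈ S) (k : ℕ) : IsName S (chkN k) := by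
  induction k using Nat.strong_induction_on with
  | _ k ih =>
    refine isName_of fun x hx => ?_
    obtain ⟨j, hj, rfl⟩ := chkN_elem.1 hx
    exact ⟨_, _, rfl, h, ih j hj⟩

theorem chkN_eval {G : Set ZFSet} (h : ∅ ∈ G) (k : ℕ) : nameEval G (chkN k) = nat k := by
  induction k using Nat.strong_induction_on with
  | _ k ih =>
    ext x
    rw [mem_nameEval, mem_nat]
    constructor
    · rintro ⟨τ, p, hp, hm, rfl⟩
      obtain ⟨j, hj, e⟩ := chkN_elem.1 hm
      obtain ⟨rfl, rfl⟩ := ZFSet.pair_inj.1 e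
      exact ⟨j, hj, ih j hj⟩
    · rintro ⟨j, hj, rfl⟩
      exact ⟨chkN j, ∅, h, chkN_elem.2 ⟨j, hj, rfl⟩, ih j hj⟩

end Parts

section Forcing

variable {𝕄 : GBModel} {n : ℕ}

/-- the condition with `n`-th coordinate `{(k,1)}` and other coordinates empty -/
def pc (a k : ZFSet) : ZFSet :=
  zimage (fun i => i.pair ∅) a ∪ {a.pair {k.pair {∅}}}

theorem DT.pc {a k : (Fin n → ZFSet) → ZFSet} (ha : DT 𝕄 n a) (hk : DT 𝕄 n k) :
    DT 𝕄 n (fun w => pc (a w) (k w)) :=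
  .un (.img ha (.pair (.var _) (.const 𝕄.empty_mem)))
    (.sing (.pair ha (.sing (.pair hk (.const one_mem_M)))))

/-- completion of a partial function to a total function on `ω` -/
def tot (b : ZFSet) : ZFSet :=
  b ∪ zimage (fun k => k.pair ∅) (ZFSet.sep (fun k => ∀ e ∈ (⋃₀ (⋃₀ b) : ZFSet), ¬ k.pair e ∈ b)
    ZFSet.omega)

theorem DT.tot {b : (Fin n → ZFSet) → ZFSet} (hb : DT 𝕄 n b) : DT 𝕄 n (fun w => tot (b w)) :=
  .un hb (.img (.sep (.const 𝕄.omega_mem) (.allB (.sUn (.sUn hb.lft))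
    (.not (.mem (.pair (.var (Fin.castSucc _)) (.var _)) hb.lft.lft))))
      (.pair (.var _) (.const 𝕄.empty_mem)))

/-- characteristic function -/
def chi (x : ZFSet) : ZFSet :=
  zimage (fun k => k.pair {∅}) x ∪ zimage (fun k => k.pair ∅)
    (ZFSet.sep (fun k => ¬ k ∈ x) ZFSet.omega)

theorem chi_M {x : ZFSet} (hx : x ∈ 𝕄.M) : chi x ∈ 𝕄.M :=
  DT.closed (.un (.img (.const hx) (.pair (.var _) (.const one_mem_M)))
    (.img (.sep (.const 𝕄.omega_mem) (.not (.mem (.var _) (.const hx))))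
      (.pair (.var _) (.const 𝕄.empty_mem))))

theorem one_ne_empty : ({∅} : ZFSet) ≠ ∅ := fun h => by
  have : (∅ : ZFSet) ∈ ({∅} : ZFSet) := by simp
  rw [h] at this; exact ZFSet.notMem_empty _ this

theorem mem_tot {b k e : ZFSet} : k.pair e ∈ tot b ↔
    k.pair e ∈ b ∨ (k ∈ ZFSet.omega ∧ e = ∅ ∧ ∀ e', k.pair e' ∉ b) := by
  unfold tot
  rw [ZFSet.mem_union, mem_zimage]
  refine or_congr_right ?_
  constructor
  · rintro ⟨z, hz, h⟩
    obtain ⟨rfl, rfl⟩ := ZFSet.pair_inj.1 h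
    obtain ⟨h1, h2⟩ := ZFSet.mem_sep.1 hz
    exact ⟨h1, rfl, fun e' he' => h2 e' (mem_UU he').2 he'⟩
  · rintro ⟨h1, rfl, h2⟩
    exact ⟨k, ZFSet.mem_sep.2 ⟨h1, fun e _ => h2 e⟩, rfl⟩

theorem mem_chi {x k e : ZFSet} : k.pair e ∈ chi x ↔
    (k ∈ x ∧ e = {∅}) ∨ (k ∈ ZFSet.omega ∧ k ∉ x ∧ e = ∅) := by
  unfold chi
  rw [ZFSet.mem_union, mem_zimage, mem_zimage]
  refine or_congr ?_ ?_
  · constructor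
    · rintro ⟨z, hz, h⟩
      obtain ⟨rfl, rfl⟩ := ZFSet.pair_inj.1 h
      exact ⟨hz, rfl⟩
    · rintro ⟨h, rfl⟩; exact ⟨k, h, rfl⟩
  · constructor
    · rintro ⟨z, hz, h⟩
      obtain ⟨rfl, rfl⟩ := ZFSet.pair_inj.1 h
      obtain ⟨h1, h2⟩ := ZFSet.mem_sep.1 hz
      exact ⟨h1, h2, rfl⟩
    · rintro ⟨h1, h2, rfl⟩; exact ⟨k, ZFSet.mem_sep.2 ⟨h1, h2⟩, rfl⟩

theorem mem_pc {a k i b : ZFSet} : i.pair b ∈ pc a k ↔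
    (i ∈ a ∧ b = ∅) ∨ (i = a ∧ b = {k.pair {∅}}) := by
  unfold pc
  rw [ZFSet.mem_union, mem_zimage, ZFSet.mem_singleton, ZFSet.pair_inj]
  refine or_congr_left ?_
  constructor
  · rintro ⟨z, hz, h⟩
    obtain ⟨rfl, rfl⟩ := ZFSet.pair_inj.1 h
    exact ⟨hz, rfl⟩
  · rintro ⟨h, rfl⟩; exact ⟨i, h, rfl⟩

theorem PCond.tot {b : ZFSet} (h : PCond 𝕄 b) : PCond 𝕄 (tot b) := by
  obtain ⟨h1, h2, h3⟩ := h
  refine ⟨DT.closed (.tot (.const h1)), fun x hx => ?_, fun k e e' he he' => ?_⟩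
  · have hx' := hx
    unfold CF.tot at hx
    rw [ZFSet.mem_union, mem_zimage] at hx
    rcases hx with hx | ⟨z, hz, rfl⟩
    · exact h2 x hx
    · exact ⟨z, ∅, rfl, (ZFSet.mem_sep.1 hz).1, .inl rfl⟩
  · rw [mem_tot] at he he'
    rcases he with he | ⟨h, rfl, hn⟩
    · rcases he' with he' | ⟨h', rfl, hn'⟩
      · exact h3 _ _ _ he he'
      · exact absurd he (hn' _)
    · rcases he' with he' | ⟨h', rfl, hn'⟩
      · exact absurd he' (hn _)
      · rfl

theorem PCond.empty : PCond 𝕄 ∅ :=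
  ⟨𝕄.empty_mem, fun x hx => absurd hx (ZFSet.notMem_empty _),
    fun a b b' h => absurd h (ZFSet.notMem_empty _)⟩

theorem PCond.chi {x : ZFSet} (hx : x ∈ PowOmega 𝕄) : PCond 𝕄 (chi x) := by
  refine ⟨chi_M hx.1, fun z hz => ?_, fun k e e' he he' => ?_⟩
  · unfold CF.chi at hz
    rw [ZFSet.mem_union, mem_zimage, mem_zimage] at hz
    rcases hz with ⟨k, hk, rfl⟩ | ⟨k, hk, rfl⟩
    · exact ⟨k, _, rfl, hx.2 hk, .inr rfl⟩
    · exact ⟨k, _, rfl, (ZFSet.mem_sep.1 hk).1, .inl rfl⟩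
  · rw [mem_chi] at he he'
    rcases he with ⟨h, rfl⟩ | ⟨_, h, rfl⟩ <;> rcases he' with ⟨h', rfl⟩ | ⟨_, h', rfl⟩ <;>
      first | rfl | exact absurd h h' | exact absurd h' h

theorem PCond.single {k : ZFSet} (hk : k ∈ ZFSet.omega) : PCond 𝕄 {k.pair {∅}} := by
  refine ⟨DT.closed (.sing (.pair (.const (𝕄.transitive _ 𝕄.omega_mem _ hk))
    (.const one_mem_M))), fun z hz => ?_, fun a e e' he he' => ?_⟩
  · exact ⟨k, {∅}, by simpa using hz, hk, .inr rfl⟩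
  · rw [ZFSet.mem_singleton, ZFSet.pair_inj] at he he'
    rw [he.2, he'.2]

/-- a convenient form of being a condition of the product -/
theorem QCond_iff {s : ZFSet} : QCond 𝕄 s ↔ s ∈ 𝕄.M ∧ ∃ m : ℕ,
    (∀ x ∈ s, ∃ a b : ZFSet, x = a.pair b) ∧
    (∀ a b b' : ZFSet, a.pair b ∈ s → a.pair b' ∈ s → b = b') ∧
    (∀ a : ZFSet, (∃ b : ZFSet, a.pair b ∈ s) ↔ a ∈ nat m) ∧
    ∀ a b : ZFSet, a.pair b ∈ s → PCond 𝕄 b := by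
  constructor
  · rintro ⟨hs, m, hm, ⟨h1, h2, h3⟩, h4⟩
    obtain ⟨m, rfl⟩ := mem_omega.1 hm
    have hd : ∀ a b : ZFSet, a.pair b ∈ s → a ∈ nat m := by
      intro a b h
      obtain ⟨a', b', e, ha⟩ := h1 _ h
      rw [(ZFSet.pair_inj.1 e).1]; exact ha
    refine ⟨hs, m, fun x hx => ?_, h2, fun a => ⟨fun ⟨b, h⟩ => hd a b h, h3 a⟩, fun a b h => ?_⟩
    · obtain ⟨a, b, e, -⟩ := h1 x hx
      exact ⟨a, b, e⟩
    · rw [← zapp_eq h fun b' h' => h2 _ _ _ h' h]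
      exact h4 a (hd a b h)
  · rintro ⟨hs, m, h1, h2, h3, h4⟩
    refine ⟨hs, nat m, nat_mem_omega m, ⟨fun x hx => ?_, h2, fun a ha => (h3 a).2 ha⟩, fun i hi => ?_⟩
    · obtain ⟨a, b, rfl⟩ := h1 x hx
      exact ⟨a, b, rfl, (h3 a).1 ⟨b, hx⟩⟩
    · obtain ⟨b, hb⟩ := (h3 i).2 hi
      rw [zapp_eq hb fun b' h' => h2 _ _ _ h' hb]
      exact h4 _ _ hb

theorem QCond.fn {s : ZFSet} (h : QCond 𝕄 s) {a b b' : ZFSet} (h1 : a.pair b ∈ s)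
    (h2 : a.pair b' ∈ s) : b = b' := by
  obtain ⟨-, m, -, h, -⟩ := QCond_iff.1 h
  exact h _ _ _ h1 h2

theorem QLe_iff {s' s : ZFSet} (hs' : QCond 𝕄 s') (hs : QCond 𝕄 s) : QLe s' s ↔
    ∀ i b : ZFSet, i.pair b ∈ s → ∃ b' : ZFSet, i.pair b' ∈ s' ∧ b ⊆ b' := by
  constructor
  · rintro ⟨h1, h2⟩ i b hb
    have hi : i ∈ pdom s := ⟨b, hb⟩
    obtain ⟨b', hb'⟩ := h1 hi
    refine ⟨b', hb', ?_⟩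
    have := h2 i hi
    rwa [zapp_eq hb fun c hc => hs.fn hc hb, zapp_eq hb' fun c hc => hs'.fn hc hb'] at this
  · intro h
    refine ⟨fun i hi => ?_, fun i hi => ?_⟩
    · obtain ⟨b, hb⟩ := hi
      obtain ⟨b', hb', -⟩ := h i b hb
      exact ⟨b', hb'⟩
    · obtain ⟨b, hb⟩ := hi
      obtain ⟨b', hb', hsub⟩ := h i b hb
      rwa [zapp_eq hb fun c hc => hs.fn hc hb, zapp_eq hb' fun c hc => hs'.fn hc hb']

theorem QCond.empty : QCond 𝕄 ∅ :=
  QCond_iff.2 ⟨𝕄.empty_mem, 0, by simp [nat]⟩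

theorem QCond.pc (m k : ℕ) : QCond 𝕄 (pc (nat m) (nat k)) := by
  refine QCond_iff.2 ⟨DT.closed (.pc (.const (nat_mem_M _)) (.const (nat_mem_M _))), m + 1,
    fun x hx => ?_, fun a b b' h h' => ?_, fun a => ?_, fun a b h => ?_⟩
  · unfold CF.pc at hx
    rw [ZFSet.mem_union, mem_zimage, ZFSet.mem_singleton] at hx
    rcases hx with ⟨i, -, rfl⟩ | rfl
    · exact ⟨_, _, rfl⟩
    · exact ⟨_, _, rfl⟩
  · rw [mem_pc] at h h'
    rcases h with ⟨h, rfl⟩ | ⟨h, rfl⟩ <;> rcases h' with ⟨h', rfl⟩ | ⟨h', rfl⟩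
    · rfl
    · subst h'; exact absurd h (ZFSet.mem_irrefl _)
    · subst h; exact absurd h' (ZFSet.mem_irrefl _)
    · rfl
  · simp only [mem_pc, nat, ZFSet.mem_insert_iff]
    constructor
    · rintro ⟨b, ⟨h, -⟩ | ⟨h, -⟩⟩
      · exact .inr h
      · exact .inl h
    · rintro (h | h)
      · exact ⟨_, .inr ⟨h, rfl⟩⟩
      · exact ⟨_, .inl ⟨h, rfl⟩⟩
  · rw [mem_pc] at h
    rcases h with ⟨h, rfl⟩ | ⟨h, rfl⟩
    · exact .empty
    · exact .single (nat_mem_omega k)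

/-- extending a condition so that all coordinates up to `j` are total -/
theorem QCond.ext_total {s : ZFSet} (hs : QCond 𝕄 s) (j : ℕ) :
    ∃ s', QCond 𝕄 s' ∧ QLe s' s ∧ ∃ b : ZFSet, (nat j).pair b ∈ s' ∧
      ∀ k ∈ ZFSet.omega, ∃ e : ZFSet, k.pair e ∈ b := by
  have hs0 := hs
  obtain ⟨hsM, m, h1, h2, h3, h4⟩ := QCond_iff.1 hs
  let d := nat (max m (j + 1))
  let s' := zimage (fun i => i.pair (CF.tot (appT s i))) d
  have mem' : ∀ a b : ZFSet, a.pair b ∈ s' ↔ a ∈ d ∧ b = CF.tot (appT s a) := by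
    intro a b
    simp only [s', mem_zimage]
    constructor
    · rintro ⟨z, hz, h⟩
      obtain ⟨rfl, rfl⟩ := ZFSet.pair_inj.1 h
      exact ⟨hz, rfl⟩
    · rintro ⟨h, rfl⟩; exact ⟨a, h, rfl⟩
  have app : ∀ a b : ZFSet, a.pair b ∈ s → appT s a = b := fun a b h => appT_eq h fun b' h' => h2 _ _ _ h' h
  have hP : ∀ a : ZFSet, PCond 𝕄 (appT s a) := by
    intro a
    by_cases h : ∃ b, a.pair b ∈ s
    · obtain ⟨b, hb⟩ := h
      rw [app a b hb]; exact h4 a b hb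
    · rw [appT_empty (by simpa using h)]; exact .empty
  have hs' : QCond 𝕄 s' := by
    refine QCond_iff.2 ⟨DT.closed (.img (.const (nat_mem_M _))
      (.pair (.var _) (.tot (.app (.const hsM) (.var _))))), max m (j + 1), fun x hx => ?_,
      fun a b b' h h' => ?_, fun a => ?_, fun a b h => ?_⟩
    · simp only [s', mem_zimage] at hx
      obtain ⟨z, -, rfl⟩ := hx
      exact ⟨_, _, rfl⟩
    · rw [mem'] at h h'
      rw [h.2, h'.2]
    · simp only [mem']
      exact ⟨fun ⟨b, h, _⟩ => h, fun h => ⟨_, h, rfl⟩⟩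
    · rw [mem'] at h
      rw [h.2]; exact (hP a).tot
  refine ⟨s', hs', (QLe_iff hs' hs0).2 fun i b hb => ?_, CF.tot (appT s (nat j)),
    (mem' _ _).2 ⟨mem_nat.2 ⟨j, by omega, rfl⟩, rfl⟩, fun k hk => ?_⟩
  · refine ⟨CF.tot (appT s i), (mem' _ _).2 ⟨?_, rfl⟩, ?_⟩
    · obtain ⟨i', hi', rfl⟩ := mem_nat.1 ((h3 i).1 ⟨b, hb⟩)
      exact mem_nat.2 ⟨i', by omega, rfl⟩
    · rw [app i b hb]
      intro z hz
      exact ZFSet.mem_union.2 (.inl hz)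
  · by_cases h : ∃ e, k.pair e ∈ appT s (nat j)
    · obtain ⟨e, he⟩ := h
      exact ⟨e, mem_tot.2 (.inl he)⟩
    · exact ⟨∅, mem_tot.2 (.inr ⟨hk, rfl, by simpa using h⟩)⟩

theorem QCond.ext_chi {s x : ZFSet} (hs : QCond 𝕄 s) (hx : x ∈ PowOmega 𝕄) :
    ∃ s', QCond 𝕄 s' ∧ QLe s' s ∧ ∃ i : ZFSet, i.pair (CF.chi x) ∈ s' := by
  have hs0 := hs
  obtain ⟨hsM, m, h1, h2, h3, h4⟩ := QCond_iff.1 hs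
  have hn : ∀ b, (nat m).pair b ∉ s := fun b hb => ZFSet.mem_irrefl _ ((h3 _).1 ⟨b, hb⟩)
  have hs' : QCond 𝕄 (insert ((nat m).pair (CF.chi x)) s) := by
    refine QCond_iff.2 ⟨DT.closed (.ins (.const (pair_M (nat_mem_M _) (chi_M hx.1)))
      (.const hsM)), m + 1, fun z hz => ?_, fun a b b' h h' => ?_, fun a => ?_, fun a b h => ?_⟩
    · rcases ZFSet.mem_insert_iff.1 hz with rfl | hz
      · exact ⟨_, _, rfl⟩
      · exact h1 z hz
    · rw [ZFSet.mem_insert_iff, ZFSet.pair_inj] at h h'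
      rcases h with ⟨rfl, rfl⟩ | h <;> rcases h' with ⟨h', rfl⟩ | h'
      · rfl
      · exact absurd h' (hn _)
      · subst h'; exact absurd h (hn _)
      · exact h2 _ _ _ h h'
    · simp only [nat, ZFSet.mem_insert_iff, ZFSet.pair_inj, ← h3]
      constructor
      · rintro ⟨b, ⟨h, -⟩ | h⟩
        · exact .inl h
        · exact .inr ⟨b, h⟩
      · rintro (h | ⟨b, h⟩)
        · exact ⟨_, .inl ⟨h, rfl⟩⟩
        · exact ⟨b, .inr h⟩
    · rw [ZFSet.mem_insert_iff, ZFSet.pair_inj] at h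
      rcases h with ⟨-, rfl⟩ | h
      · exact .chi hx
      · exact h4 _ _ h
  exact ⟨_, hs', (QLe_iff hs' hs0).2 fun i b hb => ⟨b, by simp [hb], fun z hz => hz⟩,
    nat m, by simp⟩

/-- the name for the `a`-th real -/
def tauN (f a : ZFSet) : ZFSet := zimage (fun k => (appT f k).pair (pc a k)) ZFSet.omega

def tauF (f : ZFSet) : ZFSet := zimage (fun a => (tauN f a).pair ∅) ZFSet.omega

theorem tauF_M {f : ZFSet} (hf : f ∈ 𝕄.M) : tauF f ∈ 𝕄.M :=
  DT.closed (.img (.const 𝕄.omega_mem) (.pair (.img (.const 𝕄.omega_mem)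
    (.pair (.app (.const hf) (.var _)) (.pc (.var (Fin.castSucc _)) (.var _))))
    (.const 𝕄.empty_mem)))

theorem powOmega_not_set (hctbl : AllSetsCountable 𝕄) : ¬ ∃ z ∈ 𝕄.M, z.toSet = PowOmega 𝕄 := by
  rintro ⟨z, hz, e⟩
  obtain ⟨f, hf, h1, h2, h3, h4⟩ := hctbl z hz
  let d := ZFSet.sep (fun n => ∃ a ∈ z, a.pair n ∈ f ∧ ¬ n ∈ a) ZFSet.omega
  have hd : d ∈ 𝕄.M := DT.closed (.sep (.const 𝕄.omega_mem) (.exB (.const hz)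
    (.and (.mem (.pair (.var _) (.var (Fin.castSucc _))) (.const hf))
      (.not (.mem (.var (Fin.castSucc _)) (.var _))))))
  have hdz : d ∈ z.toSet := by
    rw [e]
    exact ⟨hd, fun x hx => (ZFSet.mem_sep.1 hx).1⟩
  obtain ⟨k, hk⟩ := h3 d hdz
  have hko : k ∈ ZFSet.omega := by
    obtain ⟨a, b, e, -, hb⟩ := h1 _ hk
    rw [(ZFSet.pair_inj.1 e).2]; exact hb
  have hiff : k ∈ d ↔ ¬ k ∈ d := by
    constructor
    · intro h
      obtain ⟨-, a, -, ha, hn⟩ := ZFSet.mem_sep.1 h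
      rwa [h4 _ _ _ ha hk] at hn
    · intro h
      exact ZFSet.mem_sep.2 ⟨hko, d, hdz, hk, h⟩
  tauto

end Forcing

section Final

variable {𝕄 : GBModel}

/-- the dense class used for evaluating the `j`-th name -/
theorem D_cls {C : Set ZFSet} (hC : C ∈ 𝕄.Cls) (j : ℕ) :
    {s : ZFSet | s ∈ 𝕄.M ∧ (s ∈ C ∧ ∃ b ∈ 𝕄.M, (nat j).pair b ∈ s ∧
      ∀ k ∈ ZFSet.omega, ∃ e ∈ 𝕄.M, k.pair e ∈ b)} ∈ 𝕄.Cls := by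
  have h : Dfn 𝕄 1 (fun w => w (Fin.last 0) ∈ C ∧ ∃ b ∈ 𝕄.M, (nat j).pair b ∈ w (Fin.last 0) ∧
      ∀ k ∈ ZFSet.omega, ∃ e ∈ 𝕄.M, k.pair e ∈ b) :=
    .and (.cls hC (.var _)) (.ex (.and (.mem (.pair (.const (nat_mem_M j)) (.var _))
      (.var (Fin.castSucc _))) (.allB (.const 𝕄.omega_mem) (.ex (.mem
        (.pair (.var (Fin.castSucc _)) (.var _)) (.var (Fin.castSucc (Fin.castSucc _))))))))
  have := h.toCls (w := fun i => i.elim0) (fun i => i.elim0)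
  simpa only [snc_last] using this

theorem E_cls {C : Set ZFSet} (hC : C ∈ 𝕄.Cls) {c : ZFSet} (hc : c ∈ 𝕄.M) :
    {s : ZFSet | s ∈ 𝕄.M ∧ (s ∈ C ∧ ∃ i ∈ 𝕄.M, i.pair c ∈ s)} ∈ 𝕄.Cls := by
  have h : Dfn 𝕄 1 (fun w => w (Fin.last 0) ∈ C ∧ ∃ i ∈ 𝕄.M, i.pair c ∈ w (Fin.last 0)) :=
    .and (.cls hC (.var _)) (.ex (.mem (.pair (.var _) (.const hc)) (.var (Fin.castSucc _))))
  have := h.toCls (w := fun i => i.elim0) (fun i => i.elim0)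
  simpa only [snc_last] using this

theorem comp_M {s a b : ZFSet} (hs : s ∈ 𝕄.M) (h : a.pair b ∈ s) : a ∈ 𝕄.M ∧ b ∈ 𝕄.M := by
  have := 𝕄.sUnion_mem _ (𝕄.sUnion_mem _ hs)
  exact ⟨𝕄.transitive _ this _ (mem_UU h).1, 𝕄.transitive _ this _ (mem_UU h).2⟩

theorem tauN_eval {F : ClassForcing 𝕄} (hP : F.P = {s : ZFSet | QCond 𝕄 s})
    (hle : ∀ s' ∈ F.P, ∀ s ∈ F.P, (F.le s' s ↔ QLe s' s)) {G : Set ZFSet}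
    (hG : IsFilterOn F.P F.le G) (h0 : ∅ ∈ G) {f : ZFSet}
    (hf : ∀ k, appT f (nat k) = chkN k) {s b : ZFSet} {j : ℕ} (hs : s ∈ G)
    (hb : (nat j).pair b ∈ s) (ht : ∀ k ∈ ZFSet.omega, ∃ e : ZFSet, k.pair e ∈ b) :
    nameEval G (tauN f (nat j)) = ZFSet.sep (fun k => k.pair {∅} ∈ b) ZFSet.omega := by
  obtain ⟨hGP, -, hup, hcomp⟩ := hG
  have hQ : ∀ {s}, s ∈ G → QCond 𝕄 s := fun {s} h => by
    have := hGP h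
    rwa [hP] at this
  have hpcP : ∀ k, pc (nat j) (nat k) ∈ F.P := fun k => by
    rw [hP]; exact QCond.pc j k
  have key : ∀ k, pc (nat j) (nat k) ∈ G ↔ (nat k).pair {∅} ∈ b := by
    intro k
    constructor
    · intro hp
      obtain ⟨r, hr, h1, h2⟩ := hcomp _ hs _ hp
      rw [hle _ (hGP hr) _ (hGP hs), QLe_iff (hQ hr) (hQ hs)] at h1
      rw [hle _ (hGP hr) _ (hpcP k), QLe_iff (hQ hr) (QCond.pc j k)] at h2
      obtain ⟨b1, hb1, hsub1⟩ := h1 _ _ hb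
      obtain ⟨b2, hb2, hsub2⟩ := h2 (nat j) {(nat k).pair {∅}} (mem_pc.2 (.inr ⟨rfl, rfl⟩))
      have e12 := (hQ hr).fn hb1 hb2
      subst e12
      have hk1 : (nat k).pair {∅} ∈ b1 := hsub2 (by simp)
      obtain ⟨e, he⟩ := ht _ (nat_mem_omega k)
      obtain ⟨-, m, -, -, -, h4⟩ := QCond_iff.1 (hQ hr)
      have := (h4 _ _ hb1).2.2 _ _ _ hk1 (hsub1 he)
      rwa [this]
    · intro hk
      refine hup s hs _ (hpcP k) ?_
      rw [hle _ (hGP hs) _ (hpcP k), QLe_iff (hQ hs) (QCond.pc j k)]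
      intro i c hc
      obtain ⟨-, m, -, -, h3, -⟩ := QCond_iff.1 (hQ hs)
      rcases mem_pc.1 hc with ⟨hi, rfl⟩ | ⟨rfl, rfl⟩
      · obtain ⟨i', hi', rfl⟩ := mem_nat.1 hi
        obtain ⟨j', hj', e⟩ := mem_nat.1 ((h3 _).1 ⟨b, hb⟩)
        have ejj := nat_inj e
        subst ejj
        obtain ⟨c, hc⟩ := (h3 (nat i')).2 (mem_nat.2 ⟨i', by omega, rfl⟩)
        exact ⟨c, hc, fun z hz => absurd hz (ZFSet.notMem_empty _)⟩
      · refine ⟨b, hb, fun z hz => ?_⟩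
        rw [ZFSet.mem_singleton] at hz
        rwa [hz]
  ext x
  rw [mem_nameEval, ZFSet.mem_sep]
  constructor
  · rintro ⟨τ, p, hp, hm, rfl⟩
    obtain ⟨k, hk, e⟩ := mem_zimage.1 hm
    obtain ⟨k, rfl⟩ := mem_omega.1 hk
    obtain ⟨rfl, rfl⟩ := ZFSet.pair_inj.1 e
    rw [hf, chkN_eval h0]
    exact ⟨hk, (key k).1 hp⟩
  · rintro ⟨hx, hx'⟩
    obtain ⟨k, rfl⟩ := mem_omega.1 hx
    exact ⟨appT f (nat k), _, (key k).2 hx', mem_zimage.2 ⟨_, hx, rfl⟩, by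
      rw [hf, chkN_eval h0]⟩

theorem final_aux {F : ClassForcing 𝕄} (hP : F.P = {s : ZFSet | QCond 𝕄 s})
    (hle : ∀ s' ∈ F.P, ∀ s ∈ F.P, (F.le s' s ↔ QLe s' s)) :
    ∃ τ : ZFSet, τ ∈ 𝕄.M ∧ IsName F.P τ ∧
      ∀ G : Set ZFSet, IsGeneric 𝕄 F.P F.le G →
        (nameEval G τ).toSet = PowOmega 𝕄 := by
  obtain ⟨f, hfM, hf⟩ := chkFun_exists (𝕄 := 𝕄)
  have hPQ : ∀ {s}, s ∈ F.P ↔ QCond 𝕄 s := fun {s} => by rw [hP]; rfl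
  have h0P : ∅ ∈ F.P := hPQ.2 QCond.empty
  refine ⟨tauF f, tauF_M hfM, ?_, ?_⟩
  · refine isName_of fun x hx => ?_
    obtain ⟨a, ha, rfl⟩ := mem_zimage.1 hx
    obtain ⟨j, rfl⟩ := mem_omega.1 ha
    refine ⟨_, _, rfl, h0P, isName_of fun y hy => ?_⟩
    obtain ⟨k, hk, rfl⟩ := mem_zimage.1 hy
    obtain ⟨k, rfl⟩ := mem_omega.1 hk
    refine ⟨_, _, rfl, hPQ.2 (QCond.pc j k), ?_⟩
    rw [hf]
    exact chkN_name h0P k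
  · rintro G ⟨hG, hgen⟩
    have hGP := hG.1
    have h0 : ∅ ∈ G := by
      obtain ⟨p, hp⟩ := hG.2.1
      refine hG.2.2.1 p hp _ h0P ?_
      rw [hle _ (hGP hp) _ h0P, QLe_iff (hPQ.1 (hGP hp)) QCond.empty]
      intro i b h
      exact absurd h (ZFSet.notMem_empty _)
    have hmem : ∀ x, x ∈ nameEval G (tauF f) ↔ ∃ j, nameEval G (tauN f (nat j)) = x := by
      intro x
      rw [mem_nameEval]
      constructor
      · rintro ⟨τ, p, hp, hm, rfl⟩
        obtain ⟨k, hk, e⟩ := mem_zimage.1 hm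
        obtain ⟨k, rfl⟩ := mem_omega.1 hk
        obtain ⟨rfl, rfl⟩ := ZFSet.pair_inj.1 e
        exact ⟨k, rfl⟩
      · rintro ⟨j, rfl⟩
        exact ⟨_, ∅, h0, mem_zimage.2 ⟨_, nat_mem_omega j, rfl⟩, rfl⟩
    refine Set.ext fun x => Iff.trans (hmem x) ?_
    constructor
    · rintro ⟨j, rfl⟩
      obtain ⟨s, hsG, hsM, hsP, b, hbM, hb, ht⟩ := hgen _ (D_cls F.P_cls j) (by
        refine ⟨fun s hs => hs.2.1, fun p hp => ?_⟩
        obtain ⟨s', hs', hl, b, hb, ht⟩ := (hPQ.1 hp).ext_total j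
        have hbM := (comp_M hs'.1 hb).2
        refine ⟨s', ⟨hs'.1, hPQ.2 hs', b, hbM, hb, fun k hk => ?_⟩,
          (hle _ (hPQ.2 hs') _ hp).2 hl⟩
        obtain ⟨e, he⟩ := ht k hk
        exact ⟨e, (comp_M hbM he).2, he⟩)
      rw [tauN_eval hP hle hG h0 hf hsG hb fun k hk => (ht k hk).imp fun e he => he.2]
      exact ⟨DT.closed (.sep (.const 𝕄.omega_mem)
        (.mem (.pair (.var _) (.const one_mem_M)) (.const hbM))),
        fun z hz => (ZFSet.mem_sep.1 hz).1⟩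
    · intro hx
      obtain ⟨s, hsG, hsM, hsP, i, hiM, hi⟩ := hgen _ (E_cls F.P_cls (chi_M hx.1)) (by
        refine ⟨fun s hs => hs.2.1, fun p hp => ?_⟩
        obtain ⟨s', hs', hl, i, hi⟩ := (hPQ.1 hp).ext_chi hx
        exact ⟨s', ⟨hs'.1, hPQ.2 hs', i, (comp_M hs'.1 hi).1, hi⟩,
          (hle _ (hPQ.2 hs') _ hp).2 hl⟩)
      obtain ⟨-, m, -, -, h3, -⟩ := QCond_iff.1 (hPQ.1 hsP)
      obtain ⟨j, -, rfl⟩ := mem_nat.1 ((h3 i).1 ⟨_, hi⟩)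
      refine ⟨j, ?_⟩
      rw [tauN_eval hP hle hG h0 hf hsG hi fun k hk => ?_]
      · ext k
        rw [ZFSet.mem_sep, mem_chi]
        constructor
        · rintro ⟨-, ⟨h, -⟩ | ⟨-, -, h⟩⟩
          · exact h
          · exact absurd h one_ne_empty
        · intro h
          exact ⟨hx.2 h, .inl ⟨h, rfl⟩⟩
      · by_cases h : k ∈ x
        · exact ⟨_, mem_chi.2 (.inl ⟨h, rfl⟩)⟩
        · exact ⟨_, mem_chi.2 (.inr ⟨hk, h, rfl⟩)⟩

end Final

/-- Over a countable transitive model `M ⊨ ZF⁻` in which every set is countable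
(with `𝒞` the definable classes), the finite support product `ℚ` of `ω` many copies of the
forcing with infinite partial functions `ω → 2` admits a name `τ ∈ M` with `τ^G = 𝒫(ω)^M`
for every `ℚ`-generic `G`; in particular `ℚ` turns the proper class `𝒫(ω)^M` into a set. -/
theorem product_turns_powomega_into_set
    (𝕄 : GBModel)
    (hdef : ∀ X : Set ZFSet, X ∈ 𝕄.Cls ↔ DefinableOver 𝕄.M X)
    (hctbl : AllSetsCountable 𝕄)
    (F : ClassForcing 𝕄)
    (hP : F.P = {s : ZFSet | QCond 𝕄 s})
    (hle : ∀ s' ∈ F.P, ∀ s ∈ F.P, (F.le s' s ↔ QLe s' s)) :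
    (¬ ∃ z ∈ 𝕄.M, z.toSet = PowOmega 𝕄) ∧
    ∃ τ : ZFSet, τ ∈ 𝕄.M ∧ IsName F.P τ ∧
      ∀ G : Set ZFSet, IsGeneric 𝕄 F.P F.le G →
        (nameEval G τ).toSet = PowOmega 𝕄 := by
  exact ⟨powOmega_not_set hctbl, final_aux hP hle⟩

end CF
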